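/- arXiv:1306.0767 — 6 statements merged into one kernel-verified Lean document; each statement's English description precedes it below -/
import Mathlib

section
/- Let n ≥ 9 be a natural number and let G be either the alternating group Alt_n or the symmetric group Sym_n. Then the proportion of elements x ∈ G of even order such that the power x^(|x|/2) moves at most 4√n/3 points is at least 1/(13 log n). (Here |x| denotes the order of x and log is the natural logarithm.) -/
open scoped Classical

/-!
Let `q = 2 ^ a` and let `x = c * y`, where `c` is a `q`-cycle and `y` permutes the remaining points
with order not divisible by `q`. Then `x` has even order and `x ^ (|x| / 2)` is a power of `c`, so
it moves at most `q` points. Since `c` is the only `q`-cycle of `x`, distinct pairs `(c, y)` give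
distinct `x`, and there are `n! / (q (n - q)!)` choices of `c`. As `q` is a prime power, it divides
the order of `y` only if it divides some cycle length of `y`, and summing the proportion `1 / (q k)`
over the possible lengths `q k` shows that all but a fraction of about `(log n) / q` of the
permutations `y` are admissible. All counts are made among permutations of a fixed sign, which
treats the two groups at once. For `n ≥ 64` there is a `q` between `(5/4) log n` and `(5/2) log n`,
and for smaller `n` the choice `q = 4` works.
-/

section

open Equiv Equiv.Perm Finset
open scoped Nat

theorem dvd_div_of_prime_pow_dvd {p a u m : ℕ} (hp : p.Prime) (hum : u ∣ m) (ham : p ^ a ∣ m)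
    (hu : ¬ p ^ a ∣ u) : u ∣ m / p := by
  obtain ⟨k, rfl⟩ := hum
  have hpk : p ∣ k := by
    by_contra hpk
    exact hu (((hp.coprime_iff_not_dvd.2 hpk).pow_left a).dvd_of_dvd_mul_right ham)
  rw [Nat.mul_div_assoc u hpk]
  exact dvd_mul_right u _

section Fibers

variable {G M : Type*} [Group G] [Monoid M] (f : G →* M) {H : Subgroup G}

theorem mem_of_map_eq_of_ker_le (hH : f.ker ≤ H) {x y : G} (hy : y ∈ H) (hxy : f x = f y) :
    x ∈ H := by
  rw [← mul_inv_cancel_left y x]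
  exact H.mul_mem hy (hH (f.eq_iff.1 hxy))

variable [Fintype G] [DecidableEq M]

theorem card_filter_subgroup_eq_sum_fiber (hH : f.ker ≤ H) (P : G → Prop) [DecidablePred P] :
    #{x : H | P x} = ∑ m ∈ image f {x | x ∈ H}, #{x : G | f x = m ∧ P x} := by
  have hmaps : Set.MapsTo f ({x : G | x ∈ H ∧ P x} : Finset G) (image f {x : G | x ∈ H}) :=
    fun x hx ↦ mem_image_of_mem f ((mem_filter_univ x).2 ((mem_filter_univ x).1 hx).1)
  calc #{x : H | P x} = #{x : G | x ∈ H ∧ P x} := by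
        rw [← card_map (Function.Embedding.subtype _)]
        congr 1
        ext x
        simp [and_comm]
    _ = ∑ m ∈ image f {x | x ∈ H}, #{x : G | f x = m ∧ P x} := by
        rw [card_eq_sum_card_fiberwise hmaps]
        refine sum_congr rfl fun m hm ↦ ?_
        obtain ⟨y, hy, rfl⟩ := mem_image.1 hm
        rw [filter_filter]
        congr 1
        ext x
        have hxH := mem_of_map_eq_of_ker_le f hH (x := x) ((mem_filter_univ y).1 hy)
        simp only [mem_filter_univ]
        tauto

theorem mul_card_subgroup_le_card_filter (hH : f.ker ≤ H) {P : G → Prop} [DecidablePred P] {δ : ℝ}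
    (hδ : ∀ m, δ * #{x : G | f x = m} ≤ #{x : G | f x = m ∧ P x}) :
    δ * Fintype.card H ≤ #{x : H | P x} := by
  have hcard : Fintype.card H = ∑ m ∈ image f {x | x ∈ H}, #{x : G | f x = m} := by
    simpa using card_filter_subgroup_eq_sum_fiber f hH fun _ ↦ True
  rw [hcard, card_filter_subgroup_eq_sum_fiber f hH P, Nat.cast_sum, Nat.cast_sum, mul_sum]
  exact sum_le_sum fun m _ ↦ hδ m

end Fibers

variable {α : Type*} [Fintype α] [DecidableEq α]

theorem card_sign_eq [Nontrivial α] (s : ℤˣ) :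
    (#{x : Perm α | sign x = s} : ℝ) = (Fintype.card α)! / 2 := by
  have card_eq : #{x : Perm α | sign x = s} = #{x : Perm α | sign x = 1} :=
    MonoidHom.card_fiber_eq_of_mem_range sign (sign_surjective α s) ⟨1, sign_one⟩
  have card_alternating : Fintype.card (alternatingGroup α) = #{x : Perm α | sign x = 1} :=
    Fintype.card_of_subtype _ fun x ↦ by simp [mem_alternatingGroup]
  have two_mul := two_mul_card_alternatingGroup (α := α)
  rw [Fintype.card_perm, card_alternating, ← card_eq] at two_mul
  rw [eq_div_iff two_ne_zero, mul_comm]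
  exact_mod_cast two_mul

theorem card_subtype_notMem_support {c : Perm α} {l : ℕ} (hc : c.cycleType = {l}) :
    Fintype.card {x // x ∉ c.support} = Fintype.card α - l := by
  rw [Fintype.card_subtype_compl, Fintype.card_coe, ← sum_cycleType, hc, Multiset.sum_singleton]

theorem disjoint_ofSubtype_notMem_support (c : Perm α) (z : Perm {x // x ∉ c.support}) :
    c.Disjoint (ofSubtype z) := by
  intro x
  by_cases hx : x ∈ c.support
  · exact .inr (ofSubtype_apply_of_not_mem z (not_not.2 hx))
  · exact .inl (notMem_support.1 hx)

theorem exists_eq_mul_ofSubtype_of_mem_cycleType {x : Perm α} {l : ℕ} (hl : l ∈ x.cycleType) :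
    ∃ c : Perm α, c.cycleType = {l} ∧ ∃ z : Perm {i // i ∉ c.support}, c * ofSubtype z = x := by
  obtain ⟨c, t, rfl, hct, hc, rfl⟩ := mem_cycleType_iff.1 hl
  obtain ⟨z, rfl⟩ : t ∈ (ofSubtype (p := fun i ↦ i ∉ c.support)).range :=
    mem_range_ofSubtype_iff.2 fun i hi ↦ disjoint_right.1 hct.disjoint_support hi
  exact ⟨c, hc.cycleType, z, rfl⟩

theorem cycle_eq_of_mul_ofSubtype_eq {c c' : Perm α} {l : ℕ} (hc : c.cycleType = {l})
    (hc' : c'.cycleType = {l}) {z : Perm {i // i ∉ c.support}} {z' : Perm {i // i ∉ c'.support}}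
    (hz : l ∉ z.cycleType) (h : c * ofSubtype z = c' * ofSubtype z') : c = c' := by
  have isCycle {d : Perm α} (hd : d.cycleType = {l}) : d.IsCycle := by
    rw [← card_cycleType_eq_one, hd, Multiset.card_singleton]
  have mem_factors : c' ∈ (c * ofSubtype z).cycleFactorsFinset := by
    rw [h, (disjoint_ofSubtype_notMem_support c' z').cycleFactorsFinset_mul_eq_union,
      (isCycle hc').cycleFactorsFinset_eq_singleton]
    exact mem_union_left _ (mem_singleton_self c')
  rw [(disjoint_ofSubtype_notMem_support c z).cycleFactorsFinset_mul_eq_union,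
    (isCycle hc).cycleFactorsFinset_eq_singleton, mem_union, mem_singleton] at mem_factors
  refine (mem_factors.resolve_right fun hmem ↦ hz ?_).symm
  rw [← cycleType_ofSubtype (g := z), cycleType_def]
  refine Multiset.mem_map.2 ⟨c', hmem, ?_⟩
  rw [Function.comp_apply, ← sum_cycleType, hc', Multiset.sum_singleton]

theorem sign_mul_ofSubtype_eq_iff {p : α → Prop} [DecidablePred p] (c : Perm α)
    (z : Perm (Subtype p)) (s : ℤˣ) : sign (c * ofSubtype z) = s ↔ sign z = s * sign c := by
  rw [Perm.sign_mul, sign_ofSubtype, mul_comm, ← eq_mul_inv_iff_mul_eq, Int.units_inv_eq_self]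

theorem card_cycleType_singleton_mul_factorial {l : ℕ} (hl : 2 ≤ l) (hlα : l ≤ Fintype.card α) :
    (#{c : Perm α | c.cycleType = {l}} : ℝ) * (Fintype.card α - l)! = (Fintype.card α)! / l := by
  have h := card_of_cycleType_mul_eq α {l}
  rw [if_pos (by simpa using ⟨hlα, hl⟩)] at h
  simp only [Multiset.sum_singleton, Multiset.prod_singleton, Multiset.toFinset_singleton,
    prod_singleton, Multiset.nodup_singleton, Multiset.mem_singleton, Multiset.count_eq_one_of_mem,
    Nat.factorial_one, mul_one, ← mul_assoc] at h
  rw [eq_div_iff (by positivity)]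
  exact_mod_cast h

theorem card_mem_cycleType_le {l : ℕ} (hl : 2 ≤ l) (hlα : l ≤ Fintype.card α)
    {P : Perm α → Prop} [DecidablePred P] {b : ℝ}
    (hb : ∀ c : Perm α, c.cycleType = {l} →
      #{z : Perm {x // x ∉ c.support} | P (c * ofSubtype z)} ≤ b * (Fintype.card α - l)!) :
    #{x : Perm α | l ∈ x.cycleType ∧ P x} ≤ b * ((Fintype.card α)! / l) := by
  have hsub : ({x | l ∈ x.cycleType ∧ P x} : Finset (Perm α)) ⊆
      ({c | c.cycleType = {l}} : Finset (Perm α)).biUnion fun c ↦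
        ({z : Perm {x // x ∉ c.support} | P (c * ofSubtype z)} : Finset _).image
          fun z ↦ c * ofSubtype z := by
    intro x hx
    obtain ⟨hlx, hPx⟩ := (mem_filter_univ x).1 hx
    obtain ⟨c, hc, z, rfl⟩ := exists_eq_mul_ofSubtype_of_mem_cycleType hlx
    exact mem_biUnion.2 ⟨c, (mem_filter_univ c).2 hc,
      mem_image_of_mem _ ((mem_filter_univ z).2 hPx)⟩
  calc (#{x : Perm α | l ∈ x.cycleType ∧ P x} : ℝ)
      ≤ ∑ c : Perm α with c.cycleType = {l},
          (#{z : Perm {x // x ∉ c.support} | P (c * ofSubtype z)} : ℝ) := by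
        exact_mod_cast (card_le_card hsub).trans <| card_biUnion_le.trans <|
          sum_le_sum fun c _ ↦ card_image_le
    _ ≤ #{c : Perm α | c.cycleType = {l}} * (b * (Fintype.card α - l)!) := by
        rw [← nsmul_eq_mul]
        exact sum_le_card_nsmul _ _ _ fun c hc ↦ hb c ((mem_filter_univ c).1 hc)
    _ = b * ((Fintype.card α)! / l) := by
        rw [← card_cycleType_singleton_mul_factorial hl hlα]
        ring

theorem le_card_of_le_card_mul_ofSubtype {l : ℕ} (hl : 2 ≤ l) (hlα : l ≤ Fintype.card α)
    {P : Perm α → Prop} [DecidablePred P] {b : ℝ}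
    (hb : ∀ c : Perm α, c.cycleType = {l} → b * (Fintype.card α - l)! ≤
      #{z : Perm {x // x ∉ c.support} | l ∉ z.cycleType ∧ P (c * ofSubtype z)}) :
    b * ((Fintype.card α)! / l) ≤ #{x : Perm α | P x} := by
  set C : Finset (Perm α) := {c | c.cycleType = {l}}
  set Z : (c : Perm α) → Finset (Perm {x // x ∉ c.support}) :=
    fun c ↦ {z | l ∉ z.cycleType ∧ P (c * ofSubtype z)}
  have hdisj : (C : Set (Perm α)).PairwiseDisjoint fun c ↦ (Z c).image fun z ↦ c * ofSubtype z := by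
    intro c hc c' hc' hne
    refine disjoint_left.2 fun x hx hx' ↦ hne ?_
    obtain ⟨z, hz, rfl⟩ := mem_image.1 hx
    obtain ⟨z', -, h⟩ := mem_image.1 hx'
    exact cycle_eq_of_mul_ofSubtype_eq ((mem_filter_univ c).1 hc) ((mem_filter_univ c').1 hc')
      ((mem_filter_univ z).1 hz).1 h.symm
  have hsub : C.biUnion (fun c ↦ (Z c).image fun z ↦ c * ofSubtype z) ⊆
      ({x | P x} : Finset (Perm α)) := by
    intro x hx
    obtain ⟨c, -, hx⟩ := mem_biUnion.1 hx
    obtain ⟨z, hz, rfl⟩ := mem_image.1 hx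
    exact (mem_filter_univ _).2 ((mem_filter_univ z).1 hz).2
  calc b * ((Fintype.card α)! / l) = #C * (b * (Fintype.card α - l)!) := by
        rw [← card_cycleType_singleton_mul_factorial hl hlα]
        ring
    _ ≤ ∑ c ∈ C, (#(Z c) : ℝ) := by
        rw [← nsmul_eq_mul]
        exact card_nsmul_le_sum _ _ _ fun c hc ↦ hb c ((mem_filter_univ c).1 hc)
    _ = #(C.biUnion fun c ↦ (Z c).image fun z ↦ c * ofSubtype z) := by
        rw [card_biUnion hdisj, Nat.cast_sum]
        refine sum_congr rfl fun c _ ↦ ?_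
        rw [card_image_of_injective (Z c) fun z z' h ↦ ofSubtype_injective (mul_left_cancel h)]
    _ ≤ #{x : Perm α | P x} := by exact_mod_cast card_le_card hsub

theorem exists_mem_cycleType_of_pow_dvd_orderOf {p a : ℕ} (hp : p.Prime) (ha : a ≠ 0)
    {x : Perm α} (h : p ^ a ∣ orderOf x) : ∃ l ∈ x.cycleType, p ^ a ∣ l := by
  by_contra! hnot
  have hdvd : orderOf x ∣ orderOf x / p := by
    nth_rewrite 1 [← lcm_cycleType]
    exact Multiset.lcm_dvd.2 fun l hl ↦
      dvd_div_of_prime_pow_dvd hp (dvd_of_mem_cycleType hl) h (hnot l hl)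
  have hlt : orderOf x / p < orderOf x := Nat.div_lt_self (orderOf_pos x) hp.one_lt
  have hpos : 0 < orderOf x / p :=
    Nat.div_pos (Nat.le_of_dvd (orderOf_pos x) ((dvd_pow_self p ha).trans h)) hp.pos
  exact hlt.not_ge (Nat.le_of_dvd hpos hdvd)

/-- An upper bound, for a power `q` of a prime, on the proportion of permutations of `n` points with
a given sign having a cycle whose length is a multiple of `q`: the sum of `1 / (q * k)` over
`k ≤ n / q`, with the last term counted twice because the largest such cycle may leave at most one
further point, and then its complement has permutations of one sign only. For `n < q` the junk value
`1 / 0 = 0` makes it `0`, as it should be. -/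
noncomputable def cycleMultipleBound (q n : ℕ) : ℝ :=
  (harmonic (n / q) + 1 / (n / q : ℕ)) / q

theorem card_sign_mem_cycleType_le {l : ℕ} (hl : 2 ≤ l) (hlα : l ≤ Fintype.card α) (s : ℤˣ) :
    (#{x : Perm α | l ∈ x.cycleType ∧ sign x = s} : ℝ) ≤ (Fintype.card α)! / l := by
  rw [← one_mul ((Fintype.card α)! / l : ℝ)]
  refine card_mem_cycleType_le hl hlα fun c hc ↦ ?_
  rw [one_mul, ← card_subtype_notMem_support hc, ← Fintype.card_perm]
  exact_mod_cast card_le_univ _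

theorem card_sign_mem_cycleType_le_half {l : ℕ} (hl : 2 ≤ l) (hlα : l + 2 ≤ Fintype.card α)
    (s : ℤˣ) :
    (#{x : Perm α | l ∈ x.cycleType ∧ sign x = s} : ℝ) ≤ 1 / 2 * ((Fintype.card α)! / l) := by
  refine card_mem_cycleType_le hl (by omega) fun c hc ↦ ?_
  have hcard := card_subtype_notMem_support hc
  have : Nontrivial {x // x ∉ c.support} := Fintype.one_lt_card_iff_nontrivial.1 (by omega)
  simp_rw [sign_mul_ofSubtype_eq_iff, card_sign_eq, hcard]
  exact (div_eq_inv_mul _ _).trans_le (by rw [one_div])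

theorem card_sign_mul_mem_cycleType_le {q k : ℕ} (hq : 2 ≤ q) (hk : k ∈ Icc 1 (Fintype.card α / q))
    (s : ℤˣ) :
    (#{x : Perm α | q * k ∈ x.cycleType ∧ sign x = s} : ℝ) ≤ (Fintype.card α)! / 2 / q *
      ((k : ℝ)⁻¹ + if k = Fintype.card α / q then (k : ℝ)⁻¹ else 0) := by
  obtain ⟨hk1, hkJ⟩ := mem_Icc.1 hk
  have hqk : 2 ≤ q * k := by nlinarith
  have hqkα : q * k ≤ Fintype.card α := by
    rw [mul_comm]
    exact (Nat.le_div_iff_mul_le (by omega)).1 hkJ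
  split_ifs with h
  · refine (card_sign_mem_cycleType_le hqk hqkα s).trans_eq ?_
    push_cast
    field_simp
    ring
  · have hlt : (k + 1) * q ≤ Fintype.card α :=
      (Nat.le_div_iff_mul_le (by omega)).1 (by omega)
    refine (card_sign_mem_cycleType_le_half hqk (by linarith) s).trans_eq ?_
    push_cast
    field_simp
    ring

theorem card_sign_pow_dvd_orderOf_le {p a : ℕ} (hp : p.Prime) (ha : a ≠ 0) (s : ℤˣ) :
    (#{x : Perm α | sign x = s ∧ p ^ a ∣ orderOf x} : ℝ) ≤
      (Fintype.card α)! / 2 * cycleMultipleBound (p ^ a) (Fintype.card α) := by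
  set n := Fintype.card α
  set q := p ^ a
  set J := n / q with hJ
  have hq2 : 2 ≤ q := hp.two_le.trans (Nat.le_self_pow ha p)
  have hsub : ({x | sign x = s ∧ q ∣ orderOf x} : Finset (Perm α)) ⊆
      (Icc 1 J).biUnion fun k ↦ {x | q * k ∈ x.cycleType ∧ sign x = s} := by
    intro x hx
    obtain ⟨hs, hdvd⟩ := (mem_filter_univ x).1 hx
    obtain ⟨_, hmem, k, rfl⟩ := exists_mem_cycleType_of_pow_dvd_orderOf hp ha hdvd
    have hk : q * k ≤ n := (le_card_support_of_mem_cycleType hmem).trans (card_le_univ _)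
    have hk0 : k ≠ 0 := by
      rintro rfl
      simpa using two_le_of_mem_cycleType hmem
    have hkJ : k ≤ J := (Nat.le_div_iff_mul_le (by omega)).2 (by rwa [mul_comm])
    exact mem_biUnion.2 ⟨k, mem_Icc.2 ⟨by omega, hkJ⟩, (mem_filter_univ x).2 ⟨hmem, hs⟩⟩
  calc (#{x : Perm α | sign x = s ∧ q ∣ orderOf x} : ℝ)
      ≤ ∑ k ∈ Icc 1 J, (#{x : Perm α | q * k ∈ x.cycleType ∧ sign x = s} : ℝ) := by
        exact_mod_cast (card_le_card hsub).trans card_biUnion_le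
    _ ≤ ∑ k ∈ Icc 1 J, n ! / 2 / q * ((k : ℝ)⁻¹ + if k = J then (k : ℝ)⁻¹ else 0) :=
        sum_le_sum fun k hk ↦ card_sign_mul_mem_cycleType_le hq2 hk s
    _ ≤ n ! / 2 / q * (∑ k ∈ Icc 1 J, (k : ℝ)⁻¹ + (J : ℝ)⁻¹) := by
        rw [← mul_sum, sum_add_distrib, sum_ite_eq']
        gcongr
        split_ifs <;> simp
    _ = n ! / 2 * cycleMultipleBound q n := by
        rw [cycleMultipleBound, ← hJ, harmonic_eq_sum_Icc]
        push_cast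
        ring

theorem le_card_sign_not_pow_dvd_orderOf [Nontrivial α] {p a : ℕ} (hp : p.Prime) (ha : a ≠ 0)
    (s : ℤˣ) :
    (Fintype.card α)! / 2 * (1 - cycleMultipleBound (p ^ a) (Fintype.card α)) ≤
      (#{x : Perm α | sign x = s ∧ ¬ p ^ a ∣ orderOf x} : ℝ) := by
  have hadd := card_filter_add_card_filter_not (s := {x : Perm α | sign x = s})
    fun x ↦ p ^ a ∣ orderOf x
  rw [filter_filter, filter_filter] at hadd
  have hadd' := congrArg (Nat.cast : ℕ → ℝ) hadd
  rw [Nat.cast_add, card_sign_eq] at hadd'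
  linarith [card_sign_pow_dvd_orderOf_le (α := α) hp ha s]

theorem dvd_orderOf_and_card_support_pow_div_le {p a : ℕ} (hp : p.Prime) (ha : a ≠ 0)
    {c y : Perm α} (hc : c.cycleType = {p ^ a}) (hcy : c.Disjoint y) (hy : ¬ p ^ a ∣ orderOf y) :
    p ∣ orderOf (c * y) ∧ #((c * y) ^ (orderOf (c * y) / p)).support ≤ p ^ a := by
  have horder : orderOf (c * y) = (p ^ a).lcm (orderOf y) := by
    rw [hcy.orderOf, ← lcm_cycleType c, hc, Multiset.lcm_singleton, normalize_eq]
  have hpow : p ^ a ∣ orderOf (c * y) := horder ▸ Nat.dvd_lcm_left _ _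
  have hyo : orderOf y ∣ orderOf (c * y) := horder ▸ Nat.dvd_lcm_right _ _
  have hy_pow : y ^ (orderOf (c * y) / p) = 1 :=
    orderOf_dvd_iff_pow_eq_one.1 (dvd_div_of_prime_pow_dvd hp hyo hpow hy)
  refine ⟨(dvd_pow_self p ha).trans hpow, ?_⟩
  calc #((c * y) ^ (orderOf (c * y) / p)).support
      = #(c ^ (orderOf (c * y) / p)).support := by rw [hcy.commute.mul_pow, hy_pow, mul_one]
    _ ≤ #c.support := card_le_card (support_pow_le c _)
    _ = p ^ a := by rw [← sum_cycleType, hc, Multiset.sum_singleton]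

theorem le_card_sign_and_card_support_pow_div_le {p a : ℕ} (hp : p.Prime) (ha : a ≠ 0)
    (hα : p ^ a + 2 ≤ Fintype.card α) (s : ℤˣ) :
    (Fintype.card α)! / 2 *
        ((1 - cycleMultipleBound (p ^ a) (Fintype.card α - p ^ a)) / (p ^ a : ℕ)) ≤
      (#{x : Perm α | sign x = s ∧ p ∣ orderOf x ∧
        #(x ^ (orderOf x / p)).support ≤ p ^ a} : ℝ) := by
  set δ := 1 - cycleMultipleBound (p ^ a) (Fintype.card α - p ^ a) with hδ
  have hpa : 2 ≤ p ^ a := hp.two_le.trans (Nat.le_self_pow ha p)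
  rw [show (Fintype.card α)! / 2 * (δ / (p ^ a : ℕ)) = δ / 2 * ((Fintype.card α)! / (p ^ a : ℕ)) by
    ring]
  refine le_card_of_le_card_mul_ofSubtype hpa (by omega) fun c hc ↦ ?_
  have hcard := card_subtype_notMem_support hc
  have : Nontrivial {x // x ∉ c.support} := Fintype.one_lt_card_iff_nontrivial.1 (by omega)
  have hle := le_card_sign_not_pow_dvd_orderOf (α := {x // x ∉ c.support}) hp ha (s * sign c)
  rw [hcard, ← hδ] at hle
  rw [div_mul_comm]
  refine hle.trans (Nat.cast_le.2 (card_le_card fun z hz ↦ ?_))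
  simp only [mem_filter_univ] at hz ⊢
  obtain ⟨hsign, hdvd⟩ := hz
  refine ⟨fun hmem ↦ hdvd (dvd_of_mem_cycleType hmem), (sign_mul_ofSubtype_eq_iff c z s).2 hsign,
    dvd_orderOf_and_card_support_pow_div_le hp ha hc (disjoint_ofSubtype_notMem_support c z) ?_⟩
  rwa [orderOf_injective _ ofSubtype_injective]

theorem cycleMultipleBound_le {q n : ℕ} (hq : q ≠ 0) (hqn : q ≤ n) :
    cycleMultipleBound q n ≤ (2 + Real.log n - Real.log q) / q := by
  set J := n / q with hJ
  have hJ0 : 0 < J := Nat.div_pos hqn (by omega)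
  have hinv : (1 / J : ℝ) ≤ 1 := div_le_one_of_le₀ (by exact_mod_cast hJ0) (by positivity)
  have hlog : Real.log J ≤ Real.log n - Real.log q := by
    have hn0 : (n : ℝ) ≠ 0 := Nat.cast_ne_zero.2 (by omega)
    rw [← Real.log_div hn0 (Nat.cast_ne_zero.2 hq)]
    exact Real.log_le_log (by positivity) Nat.cast_div_le
  rw [cycleMultipleBound, ← hJ]
  gcongr
  linarith [harmonic_le_one_add_log J]

theorem harmonic_add_one_div_le {J : ℕ} (hJ : J ≤ 14) : (harmonic J + 1 / J : ℝ) ≤ 10 / 3 := by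
  interval_cases J <;> norm_num [harmonic, sum_range_succ]

theorem log_eight : Real.log 8 = 3 * Real.log 2 := by
  rw [show (8 : ℝ) = 2 ^ 3 by norm_num, Real.log_pow, Nat.cast_ofNat]

theorem two_le_log {x : ℝ} (hx : 8 ≤ x) : 2 ≤ Real.log x := by
  have hmono : Real.log 8 ≤ Real.log x := Real.log_le_log (by norm_num) hx
  linarith [log_eight, Real.log_two_gt_d9]

theorem fifteen_mul_log_le_eight_mul_sqrt {x : ℝ} (hx : 64 ≤ x) :
    15 * Real.log x ≤ 8 * √x := by
  have hsqrt : 8 ≤ √x := Real.le_sqrt_of_sq_le (by linarith)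
  have htangent : Real.log (√x / 8) ≤ √x / 8 - 1 := Real.log_le_sub_one_of_pos (by positivity)
  rw [Real.log_div (by positivity) (by norm_num), Real.log_sqrt (by linarith)] at htangent
  linarith [log_eight, Real.log_two_lt_d9]

theorem exists_two_pow_near_log {n : ℕ} (hn : 64 ≤ n) : ∃ a : ℕ, 3 ≤ a ∧
    5 / 4 * Real.log n ≤ (2 ^ a : ℕ) ∧ (2 ^ a : ℕ) ≤ 5 / 2 * Real.log n := by
  have hnR : (64 : ℝ) ≤ n := by exact_mod_cast hn
  have hlog : 2 ≤ Real.log √n := two_le_log (Real.le_sqrt_of_sq_le (by linarith))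
  rw [Real.log_sqrt (by positivity)] at hlog
  obtain ⟨b, hb, hb'⟩ := exists_nat_pow_near (x := 5 / 4 * Real.log n) (y := (2 : ℝ))
    (by linarith) one_lt_two
  have hb2 : 2 < b + 1 :=
    (pow_lt_pow_iff_right₀ (one_lt_two (α := ℝ))).1 (by linarith)
  refine ⟨b + 1, hb2, by exact_mod_cast hb'.le, ?_⟩
  push_cast
  rw [pow_succ]
  linarith

theorem exists_two_pow_estimate_of_ge {n : ℕ} (hn : 64 ≤ n) : ∃ a : ℕ, a ≠ 0 ∧ 2 ^ a + 2 ≤ n ∧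
    ((2 ^ a : ℕ) : ℝ) ≤ 4 * √n / 3 ∧
    1 / (13 * Real.log n) ≤ (1 - cycleMultipleBound (2 ^ a) (n - 2 ^ a)) / (2 ^ a : ℕ) := by
  obtain ⟨a, ha, hlower, hupper⟩ := exists_two_pow_near_log hn
  have h8 : 8 ≤ 2 ^ a := Nat.pow_le_pow_right (n := 2) two_pos ha
  set q := 2 ^ a
  set L := Real.log n
  have hL : 0 < L := Real.log_pos (by exact_mod_cast (by omega : 1 < n))
  have hq : (8 : ℝ) ≤ q := by exact_mod_cast h8
  have hnR : (64 : ℝ) ≤ n := by exact_mod_cast hn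
  have hsqrt : (q : ℝ) ≤ 4 * √n / 3 := by linarith [fifteen_mul_log_le_eight_mul_sqrt hnR]
  have hqn : 2 * q ≤ n := by
    have hsqrt8 : 8 ≤ √n := Real.le_sqrt_of_sq_le (by linarith)
    have : (2 * q : ℝ) ≤ n := by nlinarith [hsqrt8, Real.sq_sqrt n.cast_nonneg]
    exact_mod_cast this
  have hlogq : 2 ≤ Real.log q := two_le_log hq
  have hbound : cycleMultipleBound q (n - q) ≤ L / q := by
    refine (cycleMultipleBound_le (by omega) (by omega)).trans ?_
    have hmono : Real.log (n - q : ℕ) ≤ L :=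
      Real.log_le_log (by exact_mod_cast (by omega : 0 < n - q)) (by exact_mod_cast n.sub_le q)
    gcongr
    linarith
  refine ⟨a, by omega, by omega, hsqrt, ?_⟩
  -- With `t = L / q ∈ [2/5, 4/5]`, the middle term is `t (1 - t) / L ≥ 4 / (25 L)`.
  calc 1 / (13 * L) ≤ (1 - L / q) / q := by
        rw [one_sub_div (by positivity), div_div, div_le_div_iff₀ (by positivity) (by positivity)]
        nlinarith [mul_nonneg (sub_nonneg.2 hlower) (sub_nonneg.2 hupper)]
    _ ≤ (1 - cycleMultipleBound q (n - q)) / q := by gcongr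

theorem exists_two_pow_estimate_of_lt {n : ℕ} (hn : 9 ≤ n) (hn' : n < 64) : ∃ a : ℕ, a ≠ 0 ∧
    2 ^ a + 2 ≤ n ∧ ((2 ^ a : ℕ) : ℝ) ≤ 4 * √n / 3 ∧
    1 / (13 * Real.log n) ≤ (1 - cycleMultipleBound (2 ^ a) (n - 2 ^ a)) / (2 ^ a : ℕ) := by
  have hnR : (9 : ℝ) ≤ n := by exact_mod_cast hn
  have hsqrt : 3 ≤ √n := Real.le_sqrt_of_sq_le (by linarith)
  refine ⟨2, two_ne_zero, by omega, by push_cast; linarith, ?_⟩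
  have hbound : cycleMultipleBound (2 ^ 2) (n - 2 ^ 2) ≤ 10 / 3 / (2 ^ 2 : ℕ) := by
    rw [cycleMultipleBound]
    gcongr
    exact harmonic_add_one_div_le (by omega)
  calc 1 / (13 * Real.log n) ≤ 1 / (13 * 2) := by gcongr; exact two_le_log (by linarith)
    _ ≤ (1 - 10 / 3 / (2 ^ 2 : ℕ)) / (2 ^ 2 : ℕ) := by norm_num
    _ ≤ (1 - cycleMultipleBound (2 ^ 2) (n - 2 ^ 2)) / (2 ^ 2 : ℕ) := by gcongr

theorem mul_card_sign_le_card_sign_smallSupport (hα : 9 ≤ Fintype.card α) (s : ℤˣ) :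
    1 / (13 * Real.log (Fintype.card α)) * #{x : Perm α | sign x = s} ≤
      (#{x : Perm α | sign x = s ∧ Even (orderOf x) ∧
        (#(x ^ (orderOf x / 2)).support : ℝ) ≤ 4 * √(Fintype.card α) / 3} : ℝ) := by
  have : Nontrivial α := Fintype.one_lt_card_iff_nontrivial.1 (by omega)
  obtain ⟨a, ha, haα, hsqrt, hlog⟩ := (lt_or_ge (Fintype.card α) 64).elim
    (exists_two_pow_estimate_of_lt hα) exists_two_pow_estimate_of_ge
  rw [card_sign_eq, mul_comm]
  calc (Fintype.card α)! / 2 * (1 / (13 * Real.log (Fintype.card α)))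
      ≤ (Fintype.card α)! / 2 *
          ((1 - cycleMultipleBound (2 ^ a) (Fintype.card α - 2 ^ a)) / (2 ^ a : ℕ)) := by gcongr
    _ ≤ #{x : Perm α | sign x = s ∧ 2 ∣ orderOf x ∧ #(x ^ (orderOf x / 2)).support ≤ 2 ^ a} :=
        le_card_sign_and_card_support_pow_div_le Nat.prime_two ha haα s
    _ ≤ _ := by
        refine Nat.cast_le.2 (card_le_card fun x hx ↦ ?_)
        obtain ⟨hsign, heven, hsupport⟩ := (mem_filter_univ x).1 hx
        exact (mem_filter_univ x).2
          ⟨hsign, even_iff_two_dvd.2 heven, (Nat.cast_le.2 hsupport).trans hsqrt⟩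

theorem smallSupportInvolutions_proportion_general (hα : 9 ≤ Fintype.card α)
    (H : Subgroup (Perm α)) (hH : alternatingGroup α ≤ H) :
    1 / (13 * Real.log (Fintype.card α)) ≤
      (#{x : H | Even (orderOf (x : Perm α)) ∧
        (#((x : Perm α) ^ (orderOf (x : Perm α) / 2)).support : ℝ) ≤
          4 * √(Fintype.card α) / 3} : ℝ) / Fintype.card H := by
  rw [le_div_iff₀ (by exact_mod_cast Fintype.card_pos)]
  exact mul_card_subgroup_le_card_filter sign
    (P := fun x ↦ Even (orderOf x) ∧ (#(x ^ (orderOf x / 2)).support : ℝ) ≤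
      4 * √(Fintype.card α) / 3)
    (alternatingGroup_eq_sign_ker.ge.trans hH) fun s ↦ mul_card_sign_le_card_sign_smallSupport hα s

end

/-- For `n ≥ 9` and `G ∈ {Alt_n, Sym_n}`, the proportion of elements
`x ∈ G` of even order such that `x ^ (|x|/2)` moves at most `4√n/3` points is at least
`1/(13 log n)`. -/
theorem smallSupportInvolutions_proportion (n : ℕ) (hn : 9 ≤ n)
    (H : Subgroup (Equiv.Perm (Fin n)))
    (hH : H = ⊤ ∨ H = alternatingGroup (Fin n)) :
    1 / (13 * Real.log n) ≤
      ((Finset.univ.filter (fun x : H =>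
          Even (orderOf (x : Equiv.Perm (Fin n))) ∧
          ((((x : Equiv.Perm (Fin n)) ^ (orderOf (x : Equiv.Perm (Fin n)) / 2)).support.card : ℝ)
            ≤ 4 * Real.sqrt n / 3))).card : ℝ) / (Fintype.card H) := by
  simpa only [Fintype.card_fin] using smallSupportInvolutions_proportion_general
    (α := Fin n) (by rwa [Fintype.card_fin]) H (by rcases hH with rfl | rfl <;> simp)
end

section
/- Let n ≥ 7 be a natural number, let G be either Alt_n or Sym_n, let k be an integer with 1 ≤ k ≤ 2√n/3, and let s ∈ G be an involution moving exactly 2k points. Let M be the set of elements in the conjugacy class s^G that do not commute with s. Then the proportion of elements r ∈ M such that (sr)² is a 3-cycle is at least 1/3. -/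
open scoped Classical

/-!
Let `m` be the number of points moved by `s`, let `n` be the degree, and let `N i` be the number of
`m`-sets meeting `supp s` in exactly `i` points. Every `m`-set is the support of equally many
conjugates of `s`, so proportions of conjugates become ratios of sums of the `N i`.

If `supp s ∩ supp r` is a single point, then `(s r)² = ⁅s, r⁆` is a `3`-cycle, so the good
conjugates are at least `N 1` in number (up to the common factor), while `r` commutes with `s` when
the supports are disjoint. It remains to see that `N 1 + N 2 + ⋯ + N m ≤ 3 * N 1`. Here
`N (i + 1) / N i = (m - i)² / ((i + 1) (n - 2 m + i + 1))`; bounding the ratios from `i = 3` on by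
the ratio at `3` gives a geometric tail, and `9 m² ≤ 16 n` suffices as soon as `5 ≤ m`.
For `m = 4`, `n = 9` the inequality fails, but for `m ≤ 4` two involutions with the same support
commute, so the term `N m` may be dropped.
-/

section

open Finset Equiv
open scoped commutatorElement

/-! ### Subsets of given size -/

theorem card_powersetCard_filter_card_inter {α : Type*} [DecidableEq α] {S u : Finset α}
    (hS : S ⊆ u) {i m : ℕ} (hi : i ≤ m) :
    #{T ∈ powersetCard m u | #(S ∩ T) = i} = (#S).choose i * (#(u \ S)).choose (m - i) := by
  rw [← card_powersetCard i S, ← card_powersetCard (m - i) (u \ S), ← card_product]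
  refine card_nbij' (fun T ↦ (S ∩ T, T \ S)) (fun P ↦ P.1 ∪ P.2) ?_ ?_ ?_ ?_
  · intro T hT
    have hsplit : #(T ∩ S) + #(T \ S) = #T := card_inter_add_card_sdiff T S
    simp only [mem_coe, mem_filter, mem_powersetCard, mem_product, inter_comm S] at hT ⊢
    exact ⟨⟨inter_subset_right, hT.2⟩, sdiff_subset_sdiff hT.1.1 le_rfl, by omega⟩
  · rintro ⟨A, B⟩ hAB
    simp only [mem_coe, mem_filter, mem_powersetCard, mem_product] at hAB ⊢
    obtain ⟨⟨hAS, hAi⟩, hBS, hBi⟩ := hAB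
    have hdisj : Disjoint A B := disjoint_sdiff.mono hAS hBS
    have hinter : S ∩ (A ∪ B) = A := by grind
    rw [hinter, card_union_of_disjoint hdisj]
    exact ⟨⟨by grind, by omega⟩, hAi⟩
  · intro T _
    grind
  · rintro ⟨A, B⟩ hAB
    simp only [mem_coe, mem_powersetCard, mem_product] at hAB
    ext <;> grind

theorem exists_perm_map_eq {α : Type*} {S T : Finset α} (h : #S = #T) :
    ∃ g : Perm α, S.map g.toEmbedding = T := by
  refine ⟨Equiv.extendSubtype (p := (· ∈ S)) (q := (· ∈ T)) (equivOfCardEq h),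
    eq_of_subset_of_card_le ?_ (by rw [card_map, h])⟩
  intro x hx
  obtain ⟨y, hy, rfl⟩ := mem_map.1 hx
  exact Equiv.extendSubtype_mem (p := (· ∈ S)) (q := (· ∈ T)) _ y hy

/-- The number of `m`-subsets of an `n`-set meeting a fixed `m`-subset in exactly `i` points,
for `i ≤ m ≤ n`. -/
def overlapCount (n m i : ℕ) : ℕ := m.choose i * (n - m).choose (m - i)

theorem overlapCount_one_pos {n m : ℕ} (hm : 1 ≤ m) (hn : 9 * m ^ 2 ≤ 16 * n) :
    0 < overlapCount n m 1 := by
  have : 2 * m ≤ n + 1 := by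
    zify at *
    nlinarith [sq_nonneg (9 * (m : ℤ) - 16)]
  exact Nat.mul_pos (Nat.choose_pos hm) (Nat.choose_pos (by omega))

/-- The quotient of consecutive overlap counts `overlapCount n m (i + 1) / overlapCount n m i`,
in closed form. Its denominator is positive when `2 * m ≤ n`. -/
noncomputable def overlapRatio (n m i : ℕ) : ℝ :=
  ((m : ℝ) - i) ^ 2 / ((i + 1) * ((n : ℝ) - 2 * m + i + 1))

theorem overlapCount_succ {n m i : ℕ} (hn : 2 * m ≤ n) (hi : i ≤ m) :
    (overlapCount n m (i + 1) : ℝ) = overlapRatio n m i * overlapCount n m i := by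
  rcases hi.eq_or_lt with rfl | hlt
  · simp [overlapCount, overlapRatio]
  obtain ⟨b, rfl⟩ := Nat.exists_eq_add_of_lt hlt
  obtain ⟨d, rfl⟩ := Nat.exists_eq_add_of_le hn
  have hleft : ((i + b + 1).choose (i + 1) : ℝ) * (i + 1) = (i + b + 1).choose i * (b + 1) := by
    have := Nat.choose_succ_right_eq (i + b + 1) i
    rw [show i + b + 1 - i = b + 1 by omega] at this
    exact_mod_cast this
  have hright : ((i + b + 1 + d).choose (b + 1) : ℝ) * (b + 1) =
      (i + b + 1 + d).choose b * (d + i + 1) := by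
    have := Nat.choose_succ_right_eq (i + b + 1 + d) b
    rw [show i + b + 1 + d - b = d + i + 1 by omega] at this
    exact_mod_cast this
  have hden : (0 : ℝ) < (i + 1) * (d + i + 1) := by positivity
  simp only [overlapCount, overlapRatio, show i + b + 1 - i = b + 1 by omega,
    show i + b + 1 - (i + 1) = b by omega,
    show 2 * (i + b + 1) + d - (i + b + 1) = i + b + 1 + d by omega]
  push_cast
  rw [div_mul_eq_mul_div, eq_div_iff (by convert hden.ne' using 2; ring)]
  linear_combination (d + i + 1 : ℝ) * (i + b + 1 + d).choose b * hleft
    - ((i + b + 1).choose i : ℝ) * (b + 1) * hright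

theorem overlapRatio_le_overlapRatio {n m i j : ℕ} (hn : 2 * m ≤ n) (hij : i ≤ j) (hj : j ≤ m) :
    overlapRatio n m j ≤ overlapRatio n m i := by
  have hn' : (2 * m : ℝ) ≤ n := by exact_mod_cast hn
  have hij' : (i : ℝ) ≤ j := by exact_mod_cast hij
  have hj' : (j : ℝ) ≤ m := by exact_mod_cast hj
  unfold overlapRatio
  gcongr

/-! ### The overlap counts are dominated by the first one -/

theorem two_mul_le_of_nine_mul_sq_le {n m : ℕ} (hm : 3 ≤ m) (hn : 9 * m ^ 2 ≤ 16 * n) :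
    2 * m ≤ n := by
  nlinarith

theorem overlapRatio_three_lt_one {n m : ℕ} (hm : 3 ≤ m) (hn : 9 * m ^ 2 ≤ 16 * n) :
    overlapRatio n m 3 < 1 := by
  have hd : (2 * m : ℝ) ≤ n := by exact_mod_cast two_mul_le_of_nine_mul_sq_le hm hn
  have hm' : (3 : ℝ) ≤ m := by exact_mod_cast hm
  have hn' : (9 * m ^ 2 : ℝ) ≤ 16 * n := by exact_mod_cast hn
  rw [overlapRatio, div_lt_one (by push_cast; linarith)]
  push_cast
  nlinarith

theorem overlapRatio_polynomial_inequality {m d : ℝ} (hm : 5 ≤ m)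
    (hd : 9 * m ^ 2 - 32 * m ≤ 16 * d) :
    (m - 1) ^ 2 * (3 * (d + 3) * (4 * (d + 4) - (m - 3) ^ 2) + 4 * (d + 4) * (m - 2) ^ 2) ≤
      12 * (d + 2) * (d + 3) * (4 * (d + 4) - (m - 3) ^ 2) := by
  obtain ⟨u, hu, rfl⟩ : ∃ u, 0 ≤ u ∧ m = 5 + u := ⟨m - 5, by linarith, by ring⟩
  obtain ⟨t, ht, rfl⟩ : ∃ t, 0 ≤ t ∧ d = (9 * (5 + u) ^ 2 - 32 * (5 + u) + t) / 16 :=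
    ⟨16 * d - (9 * (5 + u) ^ 2 - 32 * (5 + u)), by linarith, by ring⟩
  -- In the variables `u` and `t` every coefficient of the difference is positive.
  rw [← sub_nonneg]
  ring_nf
  positivity

theorem overlapRatio_one_mul_le {n m : ℕ} (hm : 5 ≤ m) (hn : 9 * m ^ 2 ≤ 16 * n) :
    overlapRatio n m 1 * (1 - overlapRatio n m 3 + overlapRatio n m 2) ≤
      2 * (1 - overlapRatio n m 3) := by
  obtain ⟨d, rfl⟩ := Nat.exists_eq_add_of_le (two_mul_le_of_nine_mul_sq_le (by omega) hn)
  have hpoly := overlapRatio_polynomial_inequality (m := m) (d := d) (by exact_mod_cast hm) (by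
    have : (9 * m ^ 2 : ℝ) ≤ 16 * (2 * m + d) := by exact_mod_cast hn
    linarith)
  have hden (i : ℕ) : ((2 * m + d : ℕ) : ℝ) - 2 * m + i + 1 = d + (i + 1) := by push_cast; ring
  simp only [overlapRatio, hden]
  push_cast
  norm_num only
  rw [← sub_nonneg] at hpoly ⊢
  refine (div_nonneg hpoly (by positivity : (0 : ℝ) ≤ 24 * (d + 2) * (d + 3) * (d + 4))).trans_eq ?_
  field_simp
  ring

theorem one_sub_mul_sum_range_le {f : ℕ → ℝ} {q : ℝ} {l : ℕ}
    (hf : ∀ i, 0 ≤ f i) (hq : ∀ i < l, f (i + 1) ≤ q * f i) :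
    (1 - q) * ∑ i ∈ range l, f i ≤ f 0 :=
  calc (1 - q) * ∑ i ∈ range l, f i = ∑ i ∈ range l, (f i - q * f i) := by
        rw [mul_sum]; exact sum_congr rfl fun i _ ↦ by ring
    _ ≤ ∑ i ∈ range l, (f i - f (i + 1)) :=
        sum_le_sum fun i hi ↦ sub_le_sub_left (hq i (mem_range.1 hi)) _
    _ = f 0 - f l := sum_range_sub' f l
    _ ≤ f 0 := sub_le_self _ (hf l)

theorem sum_Icc_overlapCount_le {n m : ℕ} (hm : 5 ≤ m) (hn : 9 * m ^ 2 ≤ 16 * n) :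
    ∑ i ∈ Icc 1 m, overlapCount n m i ≤ 3 * overlapCount n m 1 := by
  have h2m : 2 * m ≤ n := two_mul_le_of_nine_mul_sq_le (by omega) hn
  set N : ℕ → ℝ := fun i ↦ overlapCount n m i with hN
  set tail : ℝ := ∑ i ∈ range (m - 2), N (i + 3) with htail
  have hsum : ∑ i ∈ Icc 1 m, N i = N 1 + (N 2 + tail) := by
    rw [← Ico_add_one_right_eq_Icc, sum_eq_sum_Ico_succ_bot (by omega),
      sum_eq_sum_Ico_succ_bot (by omega), sum_Ico_eq_sum_range]
    simp only [htail, add_comm, Nat.reduceAdd, Nat.reduceSubDiff]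
  have hgeom : (1 - overlapRatio n m 3) * tail ≤ N 3 := by
    refine one_sub_mul_sum_range_le (f := fun i ↦ N (i + 3)) (fun i ↦ Nat.cast_nonneg _) ?_
    intro i hi
    have him : i + 3 ≤ m := by omega
    calc N (i + 3 + 1) = overlapRatio n m (i + 3) * N (i + 3) := overlapCount_succ h2m him
      _ ≤ overlapRatio n m 3 * N (i + 3) := by
        gcongr
        exact overlapRatio_le_overlapRatio h2m (by omega) him
  have hN2 : N 2 = overlapRatio n m 1 * N 1 := overlapCount_succ h2m (by omega)
  have hN3 : N 3 = overlapRatio n m 2 * N 2 := overlapCount_succ h2m (by omega)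
  have hpos : 0 < 1 - overlapRatio n m 3 := sub_pos.2 (overlapRatio_three_lt_one (by omega) hn)
  have hN23 : (1 - overlapRatio n m 3) * (N 2 + tail) ≤ (1 - overlapRatio n m 3) * (2 * N 1) :=
    calc (1 - overlapRatio n m 3) * (N 2 + tail)
        ≤ (1 - overlapRatio n m 3) * N 2 + overlapRatio n m 2 * N 2 := by
          rw [mul_add, ← hN3]; gcongr
      _ = overlapRatio n m 1 * (1 - overlapRatio n m 3 + overlapRatio n m 2) * N 1 := by
          rw [hN2]; ring
      _ ≤ 2 * (1 - overlapRatio n m 3) * N 1 := by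
          gcongr ?_ * N 1
          exact overlapRatio_one_mul_le hm hn
      _ = (1 - overlapRatio n m 3) * (2 * N 1) := by ring
  have : ∑ i ∈ Icc 1 m, N i ≤ 3 * N 1 := by
    linarith [le_of_mul_le_mul_left hN23 hpos]
  simp only [hN] at this
  exact_mod_cast this

theorem sum_Ico_overlapCount_le {n m : ℕ} (hm : m ≤ 4) (hn : 9 * m ^ 2 ≤ 16 * n) :
    ∑ i ∈ Ico 1 m, overlapCount n m i ≤ 3 * overlapCount n m 1 := by
  suffices ∑ i ∈ Ico 1 m, (overlapCount n m i : ℝ) ≤ 3 * overlapCount n m 1 by exact_mod_cast this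
  rcases lt_or_ge m 3 with hm2 | hm3
  · have hsum : ∑ i ∈ Ico 1 m, (overlapCount n m i : ℝ) ≤ overlapCount n m 1 := by
      interval_cases m <;> simp
    linarith [(Nat.cast_nonneg _ : (0 : ℝ) ≤ overlapCount n m 1)]
  have h2m := two_mul_le_of_nine_mul_sq_le hm3 hn
  have h2m' : (2 * m : ℝ) ≤ n := by exact_mod_cast h2m
  have hn' : (9 * m ^ 2 : ℝ) ≤ 16 * n := by exact_mod_cast hn
  have hN2 : (overlapCount n m 2 : ℝ) ≤ 3 / 2 * overlapCount n m 1 := by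
    rw [overlapCount_succ h2m (by omega)]
    gcongr
    rw [overlapRatio, div_le_iff₀ (by push_cast; linarith)]
    obtain rfl | rfl : m = 3 ∨ m = 4 := by omega
    all_goals push_cast at h2m' hn' ⊢; linarith
  have hN3 : (overlapCount n m 3 : ℝ) ≤ 1 / 3 * overlapCount n m 2 := by
    rw [overlapCount_succ h2m (by omega)]
    gcongr
    rw [overlapRatio, div_le_iff₀ (by push_cast; linarith)]
    obtain rfl | rfl : m = 3 ∨ m = 4 := by omega
    all_goals push_cast at h2m' hn' ⊢; linarith
  have hsum : ∑ i ∈ Ico 1 m, (overlapCount n m i : ℝ) ≤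
      overlapCount n m 1 + overlapCount n m 2 + overlapCount n m 3 := by
    rw [sum_Ico_eq_sum_range]
    interval_cases m <;> simp [sum_range_succ]
  linarith

/-! ### Involutions and their supports -/

variable {α : Type*} [Fintype α] [DecidableEq α]

theorem isThreeCycle_commutator_of_card_support_inter_eq_one {g h : Perm α}
    (hgh : #(g.support ∩ h.support) = 1) : ⁅g, h⁆.IsThreeCycle := by
  obtain ⟨p, hp⟩ := card_eq_one.1 hgh
  have hmem (x : α) : g x ≠ x ∧ h x ≠ x ↔ x = p := by
    rw [← mem_singleton, ← hp, mem_inter, Perm.mem_support, Perm.mem_support]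
  obtain ⟨hgp, hhp⟩ : g p ≠ p ∧ h p ≠ p := (hmem p).2 rfl
  have hhgp : h (g p) = g p := by
    by_contra hne
    exact hgp ((hmem (g p)).1 ⟨g.injective.ne hgp, hne⟩)
  -- Splitting off the transposition `swap p (g p)` from `g` leaves a factor disjoint from `h`.
  have hdisj : (swap p (g p) * g).Disjoint h := by
    intro x
    by_contra! hx
    obtain rfl | hxp := eq_or_ne x p
    · exact hx.1 (by simp)
    · have hgx : g x = x := by
        by_contra hne
        exact hxp ((hmem x).1 ⟨hne, hx.2⟩)
      have hxgp : x ≠ g p := fun heq ↦ hx.2 (heq ▸ hhgp)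
      exact hx.1 (by rw [Perm.mul_apply, hgx, swap_apply_of_ne_of_ne hxp hxgp])
  have hcomm : ⁅g, h⁆ = swap (g p) p * swap (g p) (h p) := by
    calc ⁅g, h⁆ = swap p (g p) * ((swap p (g p) * g) * h) * g⁻¹ * h⁻¹ := by
          rw [commutatorElement_def, ← mul_assoc, swap_mul_self_mul]
      _ = swap p (g p) * (h * swap p (g p) * h⁻¹) := by
          rw [hdisj.commute.eq]; group
      _ = swap (g p) p * swap (g p) (h p) := by
          rw [← swap_apply_apply, hhgp, swap_comm p, swap_comm (h p)]
  rw [hcomm]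
  refine Perm.isThreeCycle_swap_mul_swap_same hgp (fun heq ↦ hgp ?_) hhp.symm
  exact h.injective (hhgp.trans heq)

theorem sq_mul_eq_commutator {G : Type*} [Group G] {s r : G} (hs : s ^ 2 = 1) (hr : r ^ 2 = 1) :
    (s * r) ^ 2 = ⁅s, r⁆ := by
  have hs' : s⁻¹ = s := inv_eq_of_mul_eq_one_left (by rwa [← sq])
  have hr' : r⁻¹ = r := inv_eq_of_mul_eq_one_left (by rwa [← sq])
  rw [commutatorElement_def, hs', hr', sq, ← mul_assoc]

theorem commute_of_support_eq_of_card_support_le_four {s r : Perm α} (hs : s ^ 2 = 1)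
    (hr : r ^ 2 = 1) (hsupp : r.support = s.support) (hcard : #s.support ≤ 4) : Commute s r := by
  have hss (x : α) : s (s x) = x := by simpa [sq] using DFunLike.congr_fun hs x
  have hrr (x : α) : r (r x) = x := by simpa [sq] using DFunLike.congr_fun hr x
  have hiff (x : α) : r x ≠ x ↔ s x ≠ x := by
    rw [← Perm.mem_support, ← Perm.mem_support, hsupp]
  ext a
  rw [Perm.mul_apply, Perm.mul_apply]
  by_cases hsa : s a = a
  · have hra : r a = a := by simpa [hsa] using hiff a
    rw [hra, hsa, hra]
  by_cases hrs : r a = s a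
  · rw [hrs, hss, ← hrs, hrr]
  have hra : r a ≠ a := (hiff a).2 hsa
  have hsra : s (r a) ≠ r a := (hiff _).1 (r.injective.ne hra)
  have hrsa : r (s a) ≠ s a := (hiff _).2 (s.injective.ne hsa)
  have hsra' : s (r a) ≠ a := fun h ↦ hrs (by rw [← hss (r a), h])
  have hrsa' : r (s a) ≠ a := fun h ↦ hrs (by rw [← hrr (s a), h])
  -- The four distinct points `a`, `s a`, `r a`, `s (r a)` exhaust the support.
  have hfour : ({a, s a, r a, s (r a)} : Finset α) = s.support := by
    refine eq_of_subset_of_card_le ?_ (hcard.trans_eq (Eq.symm ?_))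
    · simp [insert_subset_iff, hsa, hsra]
    · have := s.injective.ne hra
      grind
  have hmem : r (s a) ∈ ({a, s a, r a, s (r a)} : Finset α) := by
    rw [hfour, ← hsupp, Perm.apply_mem_support, hsupp, Perm.apply_mem_support, Perm.mem_support]
    exact hsa
  have hne : r (s a) ≠ r a := r.injective.ne hsa
  simp only [mem_insert, mem_singleton, hrsa', hrsa, hne, false_or] at hmem
  exact hmem.symm

/-! ### Conjugates of an involution -/

theorem exists_mem_eq_conj_iff_isConj {H : Subgroup (Perm α)} (hH : alternatingGroup α ≤ H)
    {s r : Perm α} (hs : s ^ 2 = 1) (hs1 : s ≠ 1) :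
    (∃ g ∈ H, r = g⁻¹ * s * g) ↔ IsConj s r := by
  rw [isConj_iff]
  constructor
  · rintro ⟨g, -, rfl⟩
    exact ⟨g⁻¹, by simp⟩
  rintro ⟨c, rfl⟩
  rcases Int.units_eq_one_or (Perm.sign c) with hc | hc
  · exact ⟨c⁻¹, hH (by simp [Perm.mem_alternatingGroup, hc]), by simp⟩
  obtain ⟨a, ha⟩ : ∃ a, s a ≠ a := by
    by_contra! h
    exact hs1 (Perm.ext h)
  have hconj : swap a (s a) * s * swap a (s a) = s := by
    have hss : s (s a) = a := by simpa [sq] using DFunLike.congr_fun hs a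
    rw [mul_assoc, mul_swap_eq_swap_mul, hss, swap_comm (s a), swap_mul_self_mul]
  -- The transposition `swap a (s a)` centralizes `s`, so it can correct the parity of `c`.
  refine ⟨swap a (s a) * c⁻¹, hH ?_, ?_⟩
  · simp [Perm.mem_alternatingGroup, hc, Perm.sign_swap ha.symm]
  · calc c * s * c⁻¹ = c * (swap a (s a) * s * swap a (s a)) * c⁻¹ := by rw [hconj]
      _ = (swap a (s a) * c⁻¹)⁻¹ * s * (swap a (s a) * c⁻¹) := by
        rw [mul_inv_rev, inv_inv, swap_inv]; group

theorem card_filter_isConj_support_eq {s : Perm α} {T : Finset α} (hT : #T = #s.support) :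
    #{r | IsConj s r ∧ r.support = T} = #{r | IsConj s r ∧ r.support = s.support} := by
  obtain ⟨g, hg⟩ := exists_perm_map_eq hT
  refine card_equiv (MulAut.conj g).toEquiv fun r ↦ ?_
  have hconj : IsConj s (g * r * g⁻¹) ↔ IsConj s r :=
    have : IsConj r (g * r * g⁻¹) := isConj_iff.2 ⟨g, rfl⟩
    ⟨fun h ↦ h.trans this.symm, fun h ↦ h.trans this⟩
  simp [hconj, Perm.support_conj, ← hg, -isConj_iff]

theorem card_filter_isConj_support_mem {s : Perm α} {F : Finset (Finset α)}
    (hF : F ⊆ powersetCard (#s.support) univ) :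
    #{r | IsConj s r ∧ r.support ∈ F} = #F * #{r | IsConj s r ∧ r.support = s.support} := by
  rw [← filter_filter, ← sum_card_fiberwise_eq_card_filter, ← smul_eq_mul]
  refine sum_eq_card_nsmul fun T hT ↦ ?_
  rw [filter_filter, card_filter_isConj_support_eq (mem_powersetCard_univ.1 (hF hT))]

theorem card_support_eq_of_isConj {s r : Perm α} (h : IsConj s r) : #r.support = #s.support := by
  obtain ⟨c, rfl⟩ := isConj_iff.1 h
  exact Perm.card_support_conj

theorem pow_eq_one_of_isConj {M : Type*} [Monoid M] {s r : M} {k : ℕ} (h : IsConj s r)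
    (hs : s ^ k = 1) : r ^ k = 1 :=
  isConj_one_right.1 (hs ▸ h.pow k)

theorem card_filter_isConj_card_inter_mem {s : Perm α} {I : Finset ℕ}
    (hI : I ⊆ range (#s.support + 1)) :
    #{r | IsConj s r ∧ #(s.support ∩ r.support) ∈ I} =
      (∑ i ∈ I, overlapCount (Fintype.card α) (#s.support) i) *
        #{r | IsConj s r ∧ r.support = s.support} := by
  have hcount : #{T ∈ powersetCard (#s.support) univ | #(s.support ∩ T) ∈ I} =
      ∑ i ∈ I, overlapCount (Fintype.card α) (#s.support) i := by
    rw [← sum_card_fiberwise_eq_card_filter]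
    refine sum_congr rfl fun i hi ↦ ?_
    rw [card_powersetCard_filter_card_inter (subset_univ _) (mem_range_succ_iff.1 (hI hi)),
      overlapCount, card_univ_sdiff]
  rw [← hcount, ← card_filter_isConj_support_mem (filter_subset _ _)]
  refine congrArg card (filter_congr fun r _ ↦ and_congr_right fun hr ↦ ?_)
  simp [card_support_eq_of_isConj hr]

theorem card_filter_isConj_card_inter_eq_one {s : Perm α} (hs1 : s ≠ 1) :
    #{r | IsConj s r ∧ #(s.support ∩ r.support) = 1} =
      overlapCount (Fintype.card α) (#s.support) 1 *
        #{r | IsConj s r ∧ r.support = s.support} := by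
  have hone : ({1} : Finset ℕ) ⊆ range (#s.support + 1) := by
    simpa [nonempty_iff_ne_empty] using hs1
  simpa only [mem_singleton, sum_singleton] using card_filter_isConj_card_inter_mem hone

/-! ### Non-commuting conjugates -/

theorem isThreeCycle_sq_mul_of_card_support_inter_eq_one {s r : Perm α} (hs : s ^ 2 = 1)
    (hr : r ^ 2 = 1) (hsr : #(s.support ∩ r.support) = 1) : ((s * r) ^ 2).IsThreeCycle := by
  rw [sq_mul_eq_commutator hs hr]
  exact isThreeCycle_commutator_of_card_support_inter_eq_one hsr

theorem not_commute_of_card_support_inter_eq_one {g h : Perm α}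
    (hgh : #(g.support ∩ h.support) = 1) : ¬ Commute g h := by
  intro hcomm
  have h3 := isThreeCycle_commutator_of_card_support_inter_eq_one hgh
  rw [commutatorElement_eq_one_iff_commute.2 hcomm] at h3
  simpa using h3.card_support

theorem card_support_inter_pos_of_not_commute {g h : Perm α} (hgh : ¬ Commute g h) :
    0 < #(g.support ∩ h.support) := by
  rw [card_pos, ← not_disjoint_iff_nonempty_inter, ← Perm.disjoint_iff_disjoint_support]
  exact mt Perm.Disjoint.commute hgh

theorem card_support_inter_lt_of_not_commute {s r : Perm α} (hs : s ^ 2 = 1) (hr : r ^ 2 = 1)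
    (hsupp : #r.support = #s.support) (hcard : #s.support ≤ 4) (hsr : ¬ Commute s r) :
    #(s.support ∩ r.support) < #s.support := by
  refine (card_le_card inter_subset_left).lt_of_ne fun heq ↦ hsr ?_
  have hsub : s.support ⊆ r.support :=
    inter_eq_left.1 (eq_of_subset_of_card_le inter_subset_left heq.ge)
  exact commute_of_support_eq_of_card_support_le_four hs hr
    (eq_of_subset_of_card_le hsub hsupp.le).symm hcard

theorem card_filter_isConj_not_commute_le_of_sum_overlapCount_le {s : Perm α} (hs1 : s ≠ 1)
    {I : Finset ℕ} (hI : I ⊆ range (#s.support + 1))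
    (hmem : ∀ r, IsConj s r → ¬ Commute s r → #(s.support ∩ r.support) ∈ I)
    {C : ℕ} (hsum : ∑ i ∈ I, overlapCount (Fintype.card α) (#s.support) i ≤
      C * overlapCount (Fintype.card α) (#s.support) 1) :
    #{r | IsConj s r ∧ ¬ Commute s r} ≤ C * #{r | IsConj s r ∧ #(s.support ∩ r.support) = 1} :=
  calc #{r | IsConj s r ∧ ¬ Commute s r}
      ≤ #{r | IsConj s r ∧ #(s.support ∩ r.support) ∈ I} :=
        card_le_card (monotone_filter_right _ fun r _ hr ↦ ⟨hr.1, hmem r hr.1 hr.2⟩)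
    _ = (∑ i ∈ I, overlapCount (Fintype.card α) (#s.support) i) *
          #{r | IsConj s r ∧ r.support = s.support} := card_filter_isConj_card_inter_mem hI
    _ ≤ C * overlapCount (Fintype.card α) (#s.support) 1 *
          #{r | IsConj s r ∧ r.support = s.support} := Nat.mul_le_mul_right _ hsum
    _ = C * #{r | IsConj s r ∧ #(s.support ∩ r.support) = 1} := by
          rw [card_filter_isConj_card_inter_eq_one hs1, mul_assoc]

theorem card_filter_isConj_not_commute_le {s : Perm α} (hs : s ^ 2 = 1) (hs1 : s ≠ 1)
    (hn : 9 * #s.support ^ 2 ≤ 16 * Fintype.card α) :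
    #{r | IsConj s r ∧ ¬ Commute s r} ≤
      3 * #{r | IsConj s r ∧ #(s.support ∩ r.support) = 1} := by
  obtain hm | hm := le_or_gt (#s.support) 4
  · refine card_filter_isConj_not_commute_le_of_sum_overlapCount_le hs1 (I := Ico 1 #s.support)
      (fun i hi ↦ ?_) (fun r hr hsr ↦ ?_) (sum_Ico_overlapCount_le hm hn)
    · grind
    · exact mem_Ico.2 ⟨card_support_inter_pos_of_not_commute hsr,
        card_support_inter_lt_of_not_commute hs (pow_eq_one_of_isConj hr hs)
          (card_support_eq_of_isConj hr) hm hsr⟩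
  · refine card_filter_isConj_not_commute_le_of_sum_overlapCount_le hs1 (I := Icc 1 #s.support)
      (fun i hi ↦ ?_) (fun r _ hsr ↦ ?_) (sum_Icc_overlapCount_le hm hn)
    · grind
    · exact mem_Icc.2 ⟨card_support_inter_pos_of_not_commute hsr, card_le_card inter_subset_left⟩

theorem card_filter_isConj_card_inter_eq_one_pos {s : Perm α} (hs1 : s ≠ 1)
    (hn : 9 * #s.support ^ 2 ≤ 16 * Fintype.card α) :
    0 < #{r | IsConj s r ∧ #(s.support ∩ r.support) = 1} := by
  have hm : 1 ≤ #s.support := by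
    simpa [Nat.one_le_iff_ne_zero] using hs1
  rw [card_filter_isConj_card_inter_eq_one hs1]
  exact Nat.mul_pos (overlapCount_one_pos hm hn)
    (card_pos.2 ⟨s, (mem_filter_univ s).2 ⟨IsConj.refl s, rfl⟩⟩)

theorem proportion_nonCommuting_conjugates_threeCycle_general {k : ℕ}
    (hk : (k : ℝ) ≤ 2 * √(Fintype.card α) / 3) {H : Subgroup (Perm α)}
    (hH : alternatingGroup α ≤ H) {s : Perm α} (hs : orderOf s = 2)
    (hsupp : #s.support = 2 * k) :
    1 / 3 ≤
      (#{r | ((∃ g ∈ H, r = g⁻¹ * s * g) ∧ s * r ≠ r * s) ∧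
        ((s * r) ^ 2).IsThreeCycle} : ℝ) /
      #{r | (∃ g ∈ H, r = g⁻¹ * s * g) ∧ s * r ≠ r * s} := by
  have hs2 : s ^ 2 = 1 := hs ▸ pow_orderOf_eq_one s
  have hs1 : s ≠ 1 := by
    rintro rfl
    simp at hs
  have hn : 9 * #s.support ^ 2 ≤ 16 * Fintype.card α := by
    have hsq : √(Fintype.card α : ℝ) ^ 2 = Fintype.card α := Real.sq_sqrt (Nat.cast_nonneg _)
    have : (9 * (2 * k) ^ 2 : ℝ) ≤ 16 * Fintype.card α := by
      nlinarith [(Nat.cast_nonneg k : (0 : ℝ) ≤ k)]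
    rw [hsupp]
    exact_mod_cast this
  simp only [exists_mem_eq_conj_iff_isConj hH hs2 hs1, ← commute_iff_eq, ne_eq]
  have hle := card_filter_isConj_not_commute_le hs2 hs1 hn
  have hpos := card_filter_isConj_card_inter_eq_one_pos hs1 hn
  have hgood : #{r | IsConj s r ∧ #(s.support ∩ r.support) = 1} ≤
      #{r | (IsConj s r ∧ ¬ Commute s r) ∧ ((s * r) ^ 2).IsThreeCycle} :=
    card_le_card <| monotone_filter_right _ fun r _ ⟨hr, hsr⟩ ↦
      ⟨⟨hr, not_commute_of_card_support_inter_eq_one hsr⟩,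
        isThreeCycle_sq_mul_of_card_support_inter_eq_one hs2 (pow_eq_one_of_isConj hr hs2) hsr⟩
  have hall : #{r | (IsConj s r ∧ ¬ Commute s r) ∧ ((s * r) ^ 2).IsThreeCycle} ≤
      #{r | IsConj s r ∧ ¬ Commute s r} :=
    card_le_card <| monotone_filter_right _ fun r _ hr ↦ hr.1
  rw [div_le_div_iff₀ zero_lt_three (by exact_mod_cast hpos.trans_le (hgood.trans hall))]
  norm_cast
  omega

end

/-- For `n ≥ 7`, `G ∈ {Alt_n, Sym_n}`, `1 ≤ k ≤ 2√n/3` and an involution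
`s ∈ G` moving exactly `2k` points, among the elements of the conjugacy class `s^G` not
commuting with `s`, the proportion of those `r` with `(s·r)²` a `3`-cycle is at least `1/3`. -/
theorem proportion_nonCommuting_conjugates_threeCycle (n : ℕ) (hn : 7 ≤ n)
    (k : ℕ) (hk1 : 1 ≤ k) (hk2 : (k : ℝ) ≤ 2 * Real.sqrt n / 3)
    (H : Subgroup (Equiv.Perm (Fin n))) (hH : H = ⊤ ∨ H = alternatingGroup (Fin n))
    (s : Equiv.Perm (Fin n)) (hsH : s ∈ H) (hs : orderOf s = 2)
    (hsupp : s.support.card = 2 * k) :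
    1 / 3 ≤
      ((Finset.univ.filter (fun r : Equiv.Perm (Fin n) =>
          ((∃ g ∈ H, r = g⁻¹ * s * g) ∧ s * r ≠ r * s) ∧
            ((s * r) ^ 2).IsThreeCycle)).card : ℝ) /
        ((Finset.univ.filter (fun r : Equiv.Perm (Fin n) =>
          (∃ g ∈ H, r = g⁻¹ * s * g) ∧ s * r ≠ r * s)).card : ℝ) :=
  proportion_nonCommuting_conjugates_threeCycle_general (by simpa using hk2)
    (hH.elim (· ▸ le_top) (·.ge)) hs hsupp
end

section
/- Let t1, t2 ∈ Sym_n be involutions such that |supp t1 ∩ supp t2| = 1, i.e., t1 and t2 move exactly one common point. Then (t1·t2)² is a 3-cycle. -/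
/-!
For involutions `(t₁ t₂)²` is the commutator `⁅t₁, t₂⁆`, and the commutator of any two
permutations `σ`, `τ` whose supports meet in a single point `a` is a 3-cycle: on the support
of `σ` the permutation `τ` agrees with the transposition `s = (a  τ a)`, so
`⁅σ, τ⁆ = σ (τ σ⁻¹ τ⁻¹) = σ (s σ⁻¹ s⁻¹) = (σ s σ⁻¹) s⁻¹ = (τ a  σ a) (τ a  a)`.
-/

open scoped commutatorElement

theorem sq_mul_eq_commutatorElement {G : Type*} [Group G] {g h : G} (hg : g ^ 2 = 1)
    (hh : h ^ 2 = 1) : (g * h) ^ 2 = ⁅g, h⁆ := by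
  have hg' : g⁻¹ = g := inv_eq_of_mul_eq_one_left (by rwa [← sq])
  have hh' : h⁻¹ = h := inv_eq_of_mul_eq_one_left (by rwa [← sq])
  rw [commutatorElement_def, hg', hh', sq, mul_assoc (g * h)]

section Perm

open Equiv

variable {α : Type*} {σ τ : Perm α} {a : α}

theorem conj_eq_conj_of_eqOn_moved {ρ : Perm α} (h : ∀ x, σ x ≠ x → τ x = ρ x) :
    τ * σ * τ⁻¹ = ρ * σ * ρ⁻¹ := by
  have hdisj : Perm.Disjoint (ρ⁻¹ * τ) σ := fun x ↦ by
    by_cases hx : σ x = x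
    · exact .inr hx
    · exact .inl (by rw [Perm.mul_apply, h x hx, Perm.inv_def, symm_apply_apply])
  have hcomm : ρ⁻¹ * τ * σ = σ * (ρ⁻¹ * τ) := hdisj.commute
  calc τ * σ * τ⁻¹ = ρ * (ρ⁻¹ * τ * σ) * τ⁻¹ := by group
    _ = ρ * (σ * (ρ⁻¹ * τ)) * τ⁻¹ := by rw [hcomm]
    _ = ρ * σ * ρ⁻¹ := by group

theorem apply_apply_eq_of_moved_unique (h : ∀ x, σ x ≠ x → τ x ≠ x → x = a) (hτ : τ a ≠ a) :
    σ (τ a) = τ a := by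
  by_contra hσ
  exact hτ (h (τ a) hσ (τ.injective.ne hτ))

theorem commutatorElement_eq_swap_mul_swap [DecidableEq α]
    (h : ∀ x, σ x ≠ x → τ x ≠ x → x = a) (hτ : τ a ≠ a) :
    ⁅σ, τ⁆ = swap (τ a) (σ a) * swap (τ a) a := by
  have hfix : σ (τ a) = τ a := apply_apply_eq_of_moved_unique h hτ
  have hswap : ∀ x, σ⁻¹ x ≠ x → τ x = swap (τ a) a x := fun x hx ↦ by
    have hσx : σ x ≠ x := fun e ↦ hx (Perm.inv_eq_iff_eq.mpr e.symm)
    obtain rfl | hxa := eq_or_ne x a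
    · rw [swap_apply_right]
    · have hxτ : x ≠ τ a := by rintro rfl; exact hσx hfix
      rw [swap_apply_of_ne_of_ne hxτ hxa]
      exact not_not.mp fun hτx ↦ hxa (h x hσx hτx)
  calc ⁅σ, τ⁆ = σ * (τ * σ⁻¹ * τ⁻¹) := by simp only [commutatorElement_def, mul_assoc]
    _ = σ * (swap (τ a) a * σ⁻¹ * (swap (τ a) a)⁻¹) := by
      rw [conj_eq_conj_of_eqOn_moved hswap]
    _ = σ * swap (τ a) a * σ⁻¹ * swap (τ a) a := by simp only [swap_inv, mul_assoc]
    _ = swap (τ a) (σ a) * swap (τ a) a := by rw [← swap_apply_apply, hfix]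

variable [Fintype α] [DecidableEq α]

theorem isThreeCycle_commutatorElement (h : (σ.support ∩ τ.support).card = 1) :
    ⁅σ, τ⁆.IsThreeCycle := by
  obtain ⟨a, ha⟩ := Finset.card_eq_one.mp h
  have hmoved : ∀ x, σ x ≠ x ∧ τ x ≠ x ↔ x = a := by
    simpa only [Finset.ext_iff, Finset.mem_inter, Perm.mem_support, Finset.mem_singleton] using ha
  obtain ⟨hσ, hτ⟩ := (hmoved a).mpr rfl
  have huniq : ∀ x, σ x ≠ x → τ x ≠ x → x = a := fun x hx hx' ↦ (hmoved x).mp ⟨hx, hx'⟩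
  have hne : τ a ≠ σ a := fun e ↦
    hτ (σ.injective ((apply_apply_eq_of_moved_unique huniq hτ).trans e))
  rw [commutatorElement_eq_swap_mul_swap huniq hτ]
  exact Perm.isThreeCycle_swap_mul_swap_same hne hτ hσ

theorem sq_mul_involutions_isThreeCycle_general {t₁ t₂ : Perm α} (h₁ : t₁ ^ 2 = 1)
    (h₂ : t₂ ^ 2 = 1) (h : (t₁.support ∩ t₂.support).card = 1) :
    ((t₁ * t₂) ^ 2).IsThreeCycle := by
  rw [sq_mul_eq_commutatorElement h₁ h₂]
  exact isThreeCycle_commutatorElement h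

end Perm

/-- If `t₁, t₂ ∈ Sym_n` are involutions moving exactly one common point,
then `(t₁·t₂)²` is a `3`-cycle. -/
theorem sq_mul_involutions_isThreeCycle (n : ℕ) (t₁ t₂ : Equiv.Perm (Fin n))
    (h₁ : orderOf t₁ = 2) (h₂ : orderOf t₂ = 2)
    (h : (t₁.support ∩ t₂.support).card = 1) :
    ((t₁ * t₂) ^ 2).IsThreeCycle :=
  sq_mul_involutions_isThreeCycle_general (orderOf_eq_prime_iff.mp h₁).1
    (orderOf_eq_prime_iff.mp h₂).1 h
end

section
/- For natural numbers n ≥ 1 and b ≥ 1, let t_b(bn) denote the proportion of permutations in Sym_{bn} all of whose cycle lengths are multiples of b but none of whose cycle lengths is a multiple of 2b. Then t_b(bn) ≥ 1/(b² · 3^{1/(2b)} · n^{1−1/(2b)}). -/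
open scoped Classical

/-!
Deleting the cycle through a chosen point shows that the proportion `p m` of permutations in
`Sym_m` with all cycle lengths in `S` satisfies `m * p m = ∑ p (m - j)`, summed over the `j ≤ m`
in `S`. The odd multiples of `b` form a `2b`-periodic set containing only `b` in its first period,
so the sums for `m + 2b` and `m` differ by the single term `p (m + b)`. Hence `u n = bn * p (bn)`
satisfies `u (n + 2) = u n + u (n + 1) / (b (n + 1))`, with `u 0 = 0` and `u 1 = 1`, and Bernoulli's
inequality yields by induction that `u n ≥ ((n + 1) / 3) ^ (1 / (2b)) / b` for `n ≥ 1`.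
-/

open Equiv Finset Function
open scoped Nat

section Periods

variable {α β : Type*}

theorem minimalPeriod_apply_of_semiconj {f : α → α} {g : β → β} {e : α → β}
    (he : Injective e) (h : Semiconj e f g) (x : α) :
    minimalPeriod g (e x) = minimalPeriod f x :=
  minimalPeriod_eq_minimalPeriod_iff.2 fun n => by
    rw [IsPeriodicPt, IsPeriodicPt, IsFixedPt, IsFixedPt, ← (h.iterate_right n).eq x, he.eq_iff]

theorem minimalPeriod_eq_card_of_isCycleOn {σ : Perm α} {s : Finset α}
    (hσ : σ.IsCycleOn s) {x : α} (hx : x ∈ s) : minimalPeriod σ x = #s :=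
  Nat.dvd_right_iff_eq.1 fun n => by
    rw [← isPeriodicPt_iff_minimalPeriod_dvd, IsPeriodicPt, IsFixedPt, Perm.iterate_eq_pow,
      hσ.pow_apply_eq hx]

theorem isCycleOn_iff_setOf_sameCycle_eq {σ : Perm α} {s : Set α} {x : α} (hx : x ∈ s) :
    σ.IsCycleOn s ↔ {y | σ.SameCycle x y} = s := by
  refine ⟨fun hσ => hσ.range_zpow hx, ?_⟩
  rintro rfl
  exact ⟨σ.bijOn fun _ => Perm.sameCycle_apply_right, fun _ hy _ hz => hy.symm.trans hz⟩

theorem isCycleOn_subtypeCongr {p : α → Prop} [DecidablePred p] {τ : Perm {a // p a}}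
    (hτ : τ.IsCycleOn Set.univ) (π : Perm {a // ¬p a}) :
    (τ.subtypeCongr π).IsCycleOn {a | p a} := by
  have apply_iff (x : α) : p (τ.subtypeCongr π x) ↔ p x := by
    rw [Perm.subtypeCongr.apply]
    split_ifs with hx
    · exact iff_of_true (τ _).2 hx
    · exact iff_of_false (π _).2 hx
  have restrict : (τ.subtypeCongr π).subtypePerm apply_iff = τ := by ext; simp
  refine ⟨Equiv.bijOn _ apply_iff, fun x hx y hy => ?_⟩
  refine (Perm.sameCycle_subtypePerm (h := apply_iff) (x := ⟨x, hx⟩) (y := ⟨y, hy⟩)).1 ?_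
  rw [restrict]
  exact hτ.2 (Set.mem_univ _) (Set.mem_univ _)

theorem isCycleOn_univ_iff_cycleType [Fintype α] [DecidableEq α] (h : 2 ≤ Fintype.card α)
    {τ : Perm α} : τ.IsCycleOn Set.univ ↔ τ.cycleType = {Fintype.card α} := by
  have := Fintype.one_lt_card_iff_nontrivial.1 h
  constructor
  · intro hτ
    have hc : τ.IsCycle :=
      Perm.isCycle_iff_exists_isCycleOn.2 ⟨_, Set.nontrivial_univ, hτ, fun _ _ => Set.mem_univ _⟩
    have hs : τ.support = univ :=
      eq_univ_of_forall fun x =>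
        Perm.mem_support.2 (hτ.apply_ne Set.nontrivial_univ (Set.mem_univ x))
    rw [hc.cycleType, hs, card_univ]
  · intro hτ
    have hc : τ.IsCycle := Perm.card_cycleType_eq_one.1 (by rw [hτ, Multiset.card_singleton])
    have hs : τ.support = univ := by
      rw [← card_eq_iff_eq_univ, ← Perm.sum_cycleType, hτ, Multiset.sum_singleton]
    convert! hc.isCycleOn
    exact (Set.eq_univ_of_forall fun x => Perm.mem_support.1 (hs ▸ mem_univ x)).symm

theorem ncard_setOf_isCycleOn_univ [Finite α] :
    {τ : Perm α | τ.IsCycleOn Set.univ}.ncard = (Nat.card α - 1)! := by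
  have := Fintype.ofFinite α
  rw [Nat.card_eq_fintype_card]
  obtain h | h := Nat.lt_or_ge (Fintype.card α) 2
  · have : Subsingleton α := Fintype.card_le_one_iff_subsingleton.1 (by omega)
    simp [Perm.isCycleOn_of_subsingleton, Nat.sub_eq_zero_of_le (Nat.le_of_lt_succ h)]
  · simp only [isCycleOn_univ_iff_cycleType h]
    rw [Set.ncard_eq_toFinset_card', Set.toFinset_ofPred, Perm.card_of_cycleType_singleton h le_rfl,
      Nat.choose_self, mul_one]

end Periods

section Counting

/-- The permutations of `α` all of whose cycle lengths lie in `S`, the length of the cycle through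
`x` being encoded as the minimal period of `x`. -/
def permsWithCycleLengths (S : Set ℕ) (α : Type*) : Set (Perm α) :=
  {σ | ∀ x, minimalPeriod σ x ∈ S}

variable (S : Set ℕ) {α β : Type*}

theorem permCongr_image_permsWithCycleLengths (e : α ≃ β) :
    e.permCongr '' permsWithCycleLengths S α = permsWithCycleLengths S β := by
  ext σ
  have hperiod (x : α) : minimalPeriod σ (e x) = minimalPeriod (e.permCongr.symm σ) x :=
    minimalPeriod_apply_of_semiconj e.injective (fun x => by simp) x
  rw [Set.mem_image_equiv]
  simp only [permsWithCycleLengths, Set.mem_ofPred_eq, e.symm.forall_congr_left, hperiod, symm_symm]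

theorem ncard_permsWithCycleLengths_eq_fin [Finite α] :
    (permsWithCycleLengths S α).ncard = (permsWithCycleLengths S (Fin (Nat.card α))).ncard := by
  rw [← permCongr_image_permsWithCycleLengths S (Finite.equivFin α),
    Set.ncard_image_of_injective _ (Equiv.injective _)]

variable {S}

theorem subtypeCongr_mem_permsWithCycleLengths_iff {p : α → Prop} [DecidablePred p]
    {τ : Perm {a // p a}} {π : Perm {a // ¬p a}} :
    τ.subtypeCongr π ∈ permsWithCycleLengths S α ↔
      τ ∈ permsWithCycleLengths S _ ∧ π ∈ permsWithCycleLengths S _ := by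
  have hτ (x : {a // p a}) : minimalPeriod (τ.subtypeCongr π) x = minimalPeriod τ x :=
    minimalPeriod_apply_of_semiconj Subtype.val_injective (fun x => by simp) x
  have hπ (x : {a // ¬p a}) : minimalPeriod (τ.subtypeCongr π) x = minimalPeriod π x :=
    minimalPeriod_apply_of_semiconj Subtype.val_injective (fun x => by simp) x
  constructor
  · exact fun h => ⟨fun x => hτ x ▸ h x, fun x => hπ x ▸ h x⟩
  · rintro ⟨h₁, h₂⟩ x
    by_cases hx : p x
    · exact hτ ⟨x, hx⟩ ▸ h₁ ⟨x, hx⟩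
    · exact hπ ⟨x, hx⟩ ▸ h₂ ⟨x, hx⟩

theorem mem_permsWithCycleLengths_of_isCycleOn_univ [Fintype α] {τ : Perm α}
    (hτ : τ.IsCycleOn Set.univ) (hS : Fintype.card α ∈ S) : τ ∈ permsWithCycleLengths S α := by
  intro x
  rw [← coe_univ] at hτ
  rwa [minimalPeriod_eq_card_of_isCycleOn hτ (mem_univ x)]

theorem image_subtypeCongrHom_permsWithCycleLengths {s : Finset α} (hs : #s ∈ S) :
    Perm.subtypeCongrHom (· ∈ s) ''
        ({τ | τ.IsCycleOn Set.univ} ×ˢ permsWithCycleLengths S {a // a ∉ s}) =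
      {σ ∈ permsWithCycleLengths S α | σ.IsCycleOn s} := by
  ext σ
  constructor
  · rintro ⟨⟨τ, π⟩, ⟨hτ, hπ⟩, rfl⟩
    have hτS := mem_permsWithCycleLengths_of_isCycleOn_univ hτ ((Fintype.card_coe s).symm ▸ hs)
    exact ⟨subtypeCongr_mem_permsWithCycleLengths_iff.2 ⟨hτS, hπ⟩, isCycleOn_subtypeCongr hτ π⟩
  · rintro ⟨hσS, hσ⟩
    have apply_iff (x : α) : σ x ∈ s ↔ x ∈ s := hσ.apply_mem_iff
    have glue : (σ.subtypePerm apply_iff).subtypeCongr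
        (σ.subtypePerm fun x => not_congr (apply_iff x)) = σ := by
      ext x
      rw [Perm.subtypeCongr.apply]
      split_ifs <;> rfl
    rw [← glue, subtypeCongr_mem_permsWithCycleLengths_iff] at hσS
    exact ⟨⟨_, _⟩, ⟨hσ.subtypePerm, hσS.2⟩, glue⟩

theorem ncard_permsWithCycleLengths_isCycleOn [Finite α] {s : Finset α} (hs : s.Nonempty) :
    {σ ∈ permsWithCycleLengths S α | σ.IsCycleOn s}.ncard =
      if #s ∈ S then (#s - 1)! * (permsWithCycleLengths S (Fin (Nat.card α - #s))).ncard
      else 0 := by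
  split_ifs with hS
  · have hcompl : Nat.card {a // a ∉ s} = Nat.card α - #s := by
      have := Fintype.ofFinite α
      simp [Fintype.card_subtype_compl]
    rw [← image_subtypeCongrHom_permsWithCycleLengths hS,
      Set.ncard_image_of_injective _ (Perm.subtypeCongrHom_injective _), Set.ncard_prod,
      ncard_setOf_isCycleOn_univ, ncard_permsWithCycleLengths_eq_fin, hcompl,
      Nat.card_eq_fintype_card, Fintype.card_coe]
  · obtain ⟨x, hx⟩ := hs
    rw [Set.ncard_eq_zero, Set.eq_empty_iff_forall_notMem]
    rintro σ ⟨hσS, hσ⟩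
    exact hS (minimalPeriod_eq_card_of_isCycleOn hσ hx ▸ hσS x)

theorem ncard_eq_sum_ncard_isCycleOn_insertNone [Fintype α] (A : Set (Perm (Option α))) :
    A.ncard = ∑ s : Finset α, {σ ∈ A | σ.IsCycleOn (insertNone s)}.ncard := by
  let cycleOfNone (σ : Perm (Option α)) : Finset α := {y | σ.SameCycle none (some y)}
  have cycleOfNone_eq_iff (σ s) : cycleOfNone σ = s ↔ σ.IsCycleOn (insertNone s) := by
    have := isCycleOn_iff_setOf_sameCycle_eq (σ := σ) (mem_coe.2 (none_mem_insertNone (s := s)))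
    simp [this, cycleOfNone, Finset.ext_iff, Set.ext_iff, Option.forall, Perm.SameCycle.refl]
  have maps : Set.MapsTo cycleOfNone A.toFinset (univ : Finset (Finset α)) := fun _ _ =>
    mem_univ _
  rw [Set.ncard_eq_toFinset_card', card_eq_sum_card_fiberwise maps]
  refine sum_congr rfl fun s _ => ?_
  rw [Set.ncard_eq_toFinset_card']
  congr 1
  ext σ
  simp [cycleOfNone_eq_iff]

theorem ncard_permsWithCycleLengths_fin_succ (S : Set ℕ) (m : ℕ) :
    (permsWithCycleLengths S (Fin (m + 1))).ncard =
      ∑ j ∈ range (m + 1), m.choose j *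
        if j + 1 ∈ S then j ! * (permsWithCycleLengths S (Fin (m - j))).ncard else 0 := by
  have hcard : Nat.card (Option (Fin m)) = m + 1 := by simp
  have hcycle (s : Finset (Fin m)) :
      {σ ∈ permsWithCycleLengths S (Option (Fin m)) | σ.IsCycleOn (insertNone s)}.ncard =
        if #s + 1 ∈ S then (#s)! * (permsWithCycleLengths S (Fin (m - #s))).ncard else 0 := by
    rw [ncard_permsWithCycleLengths_isCycleOn insertNone_nonempty, card_insertNone, hcard,
      Nat.add_sub_cancel, Nat.add_sub_add_right]
  rw [← hcard, ← ncard_permsWithCycleLengths_eq_fin, ncard_eq_sum_ncard_isCycleOn_insertNone,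
    sum_congr rfl fun s _ => hcycle s, ← powerset_univ, sum_powerset_apply_card fun j =>
      if j + 1 ∈ S then j ! * (permsWithCycleLengths S (Fin (m - j))).ncard else 0]
  simp [smul_eq_mul]

end Counting

section Proportion

/-- The proportion of permutations in `Sym_m` all of whose cycle lengths lie in `S`. -/
noncomputable def cycleLengthsProportion (S : Set ℕ) (m : ℕ) : ℝ :=
  (permsWithCycleLengths S (Fin m)).ncard / m !

theorem cycleLengthsProportion_zero (S : Set ℕ) : cycleLengthsProportion S 0 = 1 := by
  simp [cycleLengthsProportion, permsWithCycleLengths]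

theorem mul_cycleLengthsProportion (S : Set ℕ) (m : ℕ) :
    m * cycleLengthsProportion S m =
      ∑ j ∈ range m, if j + 1 ∈ S then cycleLengthsProportion S (m - (j + 1)) else 0 := by
  obtain _ | m := m
  · simp
  have hfact : ((m + 1 : ℕ) : ℝ) / (m + 1)! = 1 / m ! := by
    rw [Nat.factorial_succ, Nat.cast_mul]
    field_simp
  rw [cycleLengthsProportion, mul_div_left_comm, hfact, ncard_permsWithCycleLengths_fin_succ,
    mul_one_div, Nat.cast_sum, sum_div]
  refine sum_congr rfl fun j hj => ?_
  split_ifs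
  · rw [Nat.add_sub_add_right, cycleLengthsProportion,
      ← Nat.choose_mul_factorial_mul_factorial (mem_range_succ_iff.1 hj)]
    have := Nat.choose_pos (mem_range_succ_iff.1 hj)
    push_cast
    field_simp
  · simp

/-- The odd multiples of `b` (for `b > 0`), written as in the definition of `t_b`, so that
`t_b(bn)` is `cycleLengthsProportion (oddMultiples b) (b * n)`. -/
def oddMultiples (b : ℕ) : Set ℕ :=
  {l | b ∣ l ∧ ¬2 * b ∣ l}

variable {b : ℕ}

theorem two_mul_add_mem_oddMultiples {l : ℕ} : 2 * b + l ∈ oddMultiples b ↔ l ∈ oddMultiples b :=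
  and_congr (Nat.dvd_add_right (dvd_mul_left b 2)) (Nat.dvd_add_right dvd_rfl).not

theorem mem_oddMultiples_iff_eq {l : ℕ} (hl : 0 < l) (hlb : l ≤ 2 * b) :
    l ∈ oddMultiples b ↔ l = b := by
  constructor
  · rintro ⟨⟨k, rfl⟩, hk⟩
    have hb : 0 < b := Nat.pos_of_mul_pos_right hl
    have : k ≤ 2 := by nlinarith
    interval_cases k <;> simp_all [mul_comm]
  · rintro rfl
    exact ⟨dvd_rfl, fun h => by have := Nat.le_of_dvd hl h; omega⟩

theorem sum_range_ite_mem_oddMultiples {M : Type*} [AddCommMonoid M] {m : ℕ} (hb : 0 < b)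
    (hbm : b ≤ m) (hm : m ≤ 2 * b) (f : ℕ → M) :
    ∑ j ∈ range m, (if j + 1 ∈ oddMultiples b then f (j + 1) else 0) = f b := by
  have mem_iff (j) (hj : j ∈ range m) : j + 1 ∈ oddMultiples b ↔ j = b - 1 := by
    have := mem_range.1 hj
    rw [mem_oddMultiples_iff_eq j.succ_pos (by omega)]
    omega
  rw [sum_congr rfl fun j hj => if_congr (mem_iff j hj) rfl rfl, sum_ite_eq',
    if_pos (mem_range.2 (by omega)), Nat.sub_add_cancel hb]

theorem mul_cycleLengthsProportion_oddMultiples_self (hb : 0 < b) :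
    b * cycleLengthsProportion (oddMultiples b) b = 1 := by
  rw [mul_cycleLengthsProportion,
    sum_range_ite_mem_oddMultiples hb le_rfl (by omega)
      fun j => cycleLengthsProportion (oddMultiples b) (b - j),
    Nat.sub_self, cycleLengthsProportion_zero]

theorem mul_cycleLengthsProportion_oddMultiples_two_mul_add (hb : 0 < b) (m : ℕ) :
    (2 * b + m : ℕ) * cycleLengthsProportion (oddMultiples b) (2 * b + m) =
      cycleLengthsProportion (oddMultiples b) (b + m) +
        m * cycleLengthsProportion (oddMultiples b) m := by
  rw [mul_cycleLengthsProportion, mul_cycleLengthsProportion, sum_range_add,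
    sum_range_ite_mem_oddMultiples hb (by omega) le_rfl
      fun j => cycleLengthsProportion (oddMultiples b) (2 * b + m - j)]
  congr 1
  · congr 1
    omega
  · refine sum_congr rfl fun j _ => ?_
    rw [add_assoc, two_mul_add_mem_oddMultiples, Nat.add_sub_add_left]

end Proportion

theorem add_rpow_le_rpow_mul_one_add {x y a : ℝ} (hx : 0 < x) (hy : 0 ≤ y) (ha₀ : 0 ≤ a)
    (ha₁ : a ≤ 1) : (x + y) ^ a ≤ x ^ a * (1 + a * (y / x)) := by
  have hyx : 0 ≤ y / x := by positivity
  calc (x + y) ^ a = x ^ a * (1 + y / x) ^ a := by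
        rw [← Real.mul_rpow hx.le (by positivity), mul_one_add, mul_div_cancel₀ y hx.ne']
    _ ≤ x ^ a * (1 + a * (y / x)) := by
        gcongr
        exact rpow_one_add_le_one_add_mul_self (by linarith) ha₀ ha₁

theorem rpow_div_le_of_recurrence {c : ℝ} (hc : 1 ≤ c) {u : ℕ → ℝ} (hu₀ : 0 ≤ u 0) (hu₁ : 1 ≤ u 1)
    (hu : ∀ n : ℕ, u n + u (n + 1) / (c * (n + 1)) ≤ u (n + 2)) (n : ℕ) :
    (((n : ℝ) + 2) / 3) ^ (1 / (2 * c)) / c ≤ u (n + 1) := by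
  set a := 1 / (2 * c) with ha
  have ha₀ : 0 ≤ a := by positivity
  have ha₁ : a ≤ 1 := div_le_one_of_le₀ (by linarith) (by positivity)
  induction n using Nat.twoStepInduction with
  | zero =>
    calc (((0 : ℕ) + 2 : ℝ) / 3) ^ a / c ≤ 1 / 1 := by
          gcongr
          exact Real.rpow_le_one (by norm_num) (by norm_num) ha₀
      _ ≤ u 1 := by rwa [div_one]
  | one =>
    calc (((1 : ℕ) + 2 : ℝ) / 3) ^ a / c = 1 / c := by norm_num
      _ ≤ u 0 + u 1 / (c * ((0 : ℕ) + 1)) := by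
          rw [Nat.cast_zero, zero_add, mul_one]
          exact le_add_of_nonneg_of_le hu₀ (by gcongr)
      _ ≤ u 2 := hu 0
  | more n ih₁ ih₂ =>
    set x : ℝ := (n + 2) / 3 with hx
    have hx₀ : 0 < x := by positivity
    have ih₂' : x ^ a / c ≤ u (n + 2) := by
      refine le_trans ?_ ih₂
      rw [hx, Nat.cast_succ]
      gcongr
      linarith
    -- The choice `a = 1 / (2 * c)` makes the Bernoulli increment equal to the recurrence weight.
    have weight : a * (2 / 3 / x) = 1 / (c * ((n + 1 : ℕ) + 1)) := by
      rw [ha, hx, Nat.cast_succ]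
      field_simp
      ring
    calc (((n + 2 : ℕ) + 2 : ℝ) / 3) ^ a / c = (x + 2 / 3) ^ a / c := by
          rw [hx, Nat.cast_add, Nat.cast_two, ← add_div]
      _ ≤ x ^ a * (1 + a * (2 / 3 / x)) / c := by
          gcongr
          exact add_rpow_le_rpow_mul_one_add hx₀ (by norm_num) ha₀ ha₁
      _ = x ^ a / c + x ^ a / c / (c * ((n + 1 : ℕ) + 1)) := by rw [weight]; ring
      _ ≤ u (n + 1) + u (n + 2) / (c * ((n + 1 : ℕ) + 1)) := by gcongr
      _ ≤ u (n + 3) := hu (n + 1)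

theorem rpow_div_le_mul_cycleLengthsProportion_oddMultiples {n b : ℕ} (hn : 0 < n) (hb : 0 < b) :
    ((n : ℝ) / 3) ^ (1 / (2 * (b : ℝ))) / b ≤
      b * n * cycleLengthsProportion (oddMultiples b) (b * n) := by
  let u (k : ℕ) : ℝ := b * k * cycleLengthsProportion (oddMultiples b) (b * k)
  have hu₀ : u 0 = 0 := by simp [u]
  have hu₁ : u 1 = 1 := by simpa [u] using mul_cycleLengthsProportion_oddMultiples_self hb
  have hu (k : ℕ) : u k + u (k + 1) / (b * (k + 1)) = u (k + 2) := by
    have recurrence := mul_cycleLengthsProportion_oddMultiples_two_mul_add hb (b * k)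
    rw [show 2 * b + b * k = b * (k + 2) by ring,
      show b + b * k = b * (k + 1) by ring] at recurrence
    push_cast at recurrence
    simp only [u]
    push_cast
    rw [mul_div_cancel_left₀ _ (by positivity), recurrence, add_comm]
  obtain ⟨k, rfl⟩ := Nat.exists_eq_add_of_le' hn
  refine le_trans ?_ (rpow_div_le_of_recurrence (Nat.one_le_cast.2 hb) hu₀.ge hu₁.ge
    (fun k => (hu k).le) k)
  gcongr
  push_cast
  linarith

/-- For `n, b ≥ 1`, the proportion `t_b(bn)` of permutations of `Sym_{bn}`
all of whose cycle lengths are divisible by `b` but none by `2b` satisfies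
`t_b(bn) ≥ 1/(b² · 3^{1/(2b)} · n^{1-1/(2b)})`.  The cycle length of the point `x` under `σ`
is `Function.minimalPeriod σ x` (fixed points have cycle length `1`). -/
theorem tb_lower_bound (n b : ℕ) (hn : 1 ≤ n) (hb : 1 ≤ b) :
    1 / ((b : ℝ) ^ 2 * (3 : ℝ) ^ (1 / (2 * (b : ℝ))) * (n : ℝ) ^ (1 - 1 / (2 * (b : ℝ)))) ≤
      ((Finset.univ.filter (fun σ : Equiv.Perm (Fin (b * n)) =>
          ∀ x, b ∣ Function.minimalPeriod σ x ∧ ¬ (2 * b ∣ Function.minimalPeriod σ x))).card : ℝ)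
        / (Nat.factorial (b * n) : ℝ) := by
  have card_div_eq : ((Finset.univ.filter (fun σ : Equiv.Perm (Fin (b * n)) =>
      ∀ x, b ∣ Function.minimalPeriod σ x ∧ ¬ (2 * b ∣ Function.minimalPeriod σ x))).card : ℝ)
        / (Nat.factorial (b * n) : ℝ) = cycleLengthsProportion (oddMultiples b) (b * n) := by
    rw [cycleLengthsProportion, ← Set.ncard_coe_finset, coe_filter_univ]
    rfl
  have growth := rpow_div_le_mul_cycleLengthsProportion_oddMultiples hn hb
  rw [card_div_eq]
  calc _ = (n / 3 : ℝ) ^ (1 / (2 * (b : ℝ))) / b / (b * n) := by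
        rw [Real.div_rpow n.cast_nonneg zero_le_three, Real.rpow_sub (Nat.cast_pos.2 hn),
          Real.rpow_one]
        field_simp
    _ ≤ _ := (div_le_iff₀' (by positivity)).2 growth
end

section
/- For all natural numbers b ≥ 2 and n ≥ 1, the proportion ũ_b(n) satisfies ũ_b(n) ≥ (1 − 1/(b−1)) · u_b(n). -/
/-!
The points in cycles of length divisible by `b` and the remaining points are permuted independently,
so both the proportion `u_b(n)` and the mean of the sign over the same permutations are convolutions
over the sizes `i + m = n` of the two parts. The remaining `m` points carry a permutation without
cycle lengths divisible by `b`. The proportion of such permutations in `Sym_m` is the coefficient of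
`x^m` in `(1 - x)^(-1) * (1 - x^b)^(1/b)`, and the mean of their signs is, up to sign, that of
`(1 - x) * (1 - x^b)^(-1/b)`. Comparing coefficients, for `m ≥ 2` the second is at most `1/(b - 1)`
times the first in absolute value, and for `b ≥ 3` the bound `j ≤ 4√n/(3b)` forces `m ≥ 2`. Finally
`ũ_b(n)` is the sum of `u_b(n)` and the signed mean.
-/

open scoped Classical

/-- `ubProp b n σ` says: there is an integer `j` with `1 ≤ j ≤ 4√n/(3b)` such that exactly
`j·b` points of `{1,…,n}` lie in cycles of `σ` of length divisible by `b` but not by `2b`,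
and the remaining points lie in cycles of length not divisible by `b`.  The cycle length of
the point `x` under `σ` is `Function.minimalPeriod σ x`. -/
def ubProp (b n : ℕ) (σ : Equiv.Perm (Fin n)) : Prop :=
  ∃ j : ℕ, 1 ≤ j ∧ (j : ℝ) ≤ 4 * Real.sqrt n / (3 * (b : ℝ)) ∧
    (Finset.univ.filter (fun x : Fin n =>
        b ∣ Function.minimalPeriod σ x ∧ ¬ (2 * b ∣ Function.minimalPeriod σ x))).card = j * b ∧
    ∀ x : Fin n,
      ¬ (b ∣ Function.minimalPeriod σ x ∧ ¬ (2 * b ∣ Function.minimalPeriod σ x)) →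
        ¬ (b ∣ Function.minimalPeriod σ x)

/-- `ub b n` is the proportion of permutations in `Sym_n` satisfying `ubProp b n`. -/
noncomputable def ub (b n : ℕ) : ℝ :=
  ((Finset.univ.filter (fun σ : Equiv.Perm (Fin n) => ubProp b n σ)).card : ℝ) /
    (Nat.factorial n : ℝ)

/-- `utb b n` is the proportion of elements of `Alt_n` satisfying `ubProp b n`. -/
noncomputable def utb (b n : ℕ) : ℝ :=
  ((Finset.univ.filter (fun σ : Equiv.Perm (Fin n) =>
      σ ∈ alternatingGroup (Fin n) ∧ ubProp b n σ)).card : ℝ) /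
    (Fintype.card (alternatingGroup (Fin n)) : ℝ)

open Finset Equiv Function

open scoped Nat

namespace CycleIndex

section CycleLengths

variable {α : Type*} [Fintype α] [DecidableEq α] (σ : Perm α)

theorem minimalPeriod_eq_card_support_cycleOf {x : α} (hx : x ∈ σ.support) :
    minimalPeriod σ x = #(σ.cycleOf x).support := by
  have hmem : x ∈ (σ.cycleOf x).support := Perm.mem_support_cycleOf_iff.2 ⟨.rfl, hx⟩
  refine Nat.dvd_right_iff_eq.1 fun n => ?_
  rw [← (σ.isCycleOn_support_cycleOf x).pow_apply_eq hmem, ← isPeriodicPt_iff_minimalPeriod_dvd,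
    ← Perm.iterate_eq_pow]
  rfl

theorem sum_support_comp_minimalPeriod {M : Type*} [AddCommMonoid M] (f : ℕ → M) :
    ∑ x ∈ σ.support, f (minimalPeriod σ x) = (σ.cycleType.map fun k => k • f k).sum := by
  have maps : ∀ x ∈ σ.support, σ.cycleOf x ∈ σ.cycleFactorsFinset := fun x =>
    Perm.cycleOf_mem_cycleFactorsFinset_iff.2
  rw [← sum_fiberwise_of_maps_to maps, Perm.cycleType_def, Multiset.map_map]
  refine sum_congr rfl fun c hc => ?_
  have fiber : {x ∈ σ.support | σ.cycleOf x = c} = c.support := by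
    ext x
    rw [mem_filter]
    refine ⟨?_, fun hx => ⟨Perm.mem_cycleFactorsFinset_support_le hc hx,
      (Perm.cycle_is_cycleOf hx hc).symm⟩⟩
    rintro ⟨hx, rfl⟩
    exact Perm.mem_support_cycleOf_iff.2 ⟨.rfl, hx⟩
  rw [fiber]
  refine sum_eq_card_nsmul fun x hx => ?_
  rw [minimalPeriod_eq_card_support_cycleOf σ (Perm.mem_cycleFactorsFinset_support_le hc hx),
    ← Perm.cycle_is_cycleOf hx hc]
  rfl

theorem sum_comp_minimalPeriod {M : Type*} [AddCommMonoid M] (f : ℕ → M) :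
    ∑ x, f (minimalPeriod σ x) = (σ.partition.parts.map fun k => k • f k).sum := by
  have fixed : ∀ x ∈ σ.supportᶜ, f (minimalPeriod σ x) = f 1 := fun x hx => by
    rw [minimalPeriod_eq_one_iff_isFixedPt.2 (Perm.notMem_support.1 (mem_compl.1 hx))]
  rw [← sum_add_sum_compl σ.support, sum_support_comp_minimalPeriod, sum_eq_card_nsmul fixed,
    card_compl, Perm.parts_partition, Multiset.map_add, Multiset.sum_add, Multiset.map_replicate,
    Multiset.sum_replicate, one_nsmul]

theorem card_filter_minimalPeriod (P : ℕ → Prop) [DecidablePred P] :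
    #{x | P (minimalPeriod σ x)} = (σ.partition.parts.filter P).sum := by
  rw [card_filter, sum_comp_minimalPeriod σ fun k => if P k then 1 else 0]
  simp only [smul_eq_mul, mul_ite, mul_one, mul_zero]
  induction σ.partition.parts using Multiset.induction_on with
  | empty => rfl
  | cons k s ih => by_cases hk : P k <;> simp [hk, ih]

theorem forall_minimalPeriod_iff (P : ℕ → Prop) :
    (∀ x, P (minimalPeriod σ x)) ↔ ∀ k ∈ σ.partition.parts, P k := by
  have count_zero : #{x | ¬ P (minimalPeriod σ x)} = 0 ↔
      (σ.partition.parts.filter fun k => ¬ P k).sum = 0 := by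
    rw [card_filter_minimalPeriod σ fun k => ¬ P k]
  rw [card_eq_zero, filter_eq_empty_iff, Multiset.sum_eq_zero_iff] at count_zero
  simp only [mem_univ, not_not, forall_const, Multiset.mem_filter, and_imp] at count_zero
  refine count_zero.trans ⟨fun h k hk => ?_, fun h k hk hPk => absurd (h k hk) hPk⟩
  by_contra hPk
  exact (σ.partition.parts_pos hk).ne' (h k hk hPk)

theorem sign_eq_prod_parts (R : Type*) [CommRing R] :
    ((Perm.sign σ : ℤ) : R) = (σ.partition.parts.map fun k => (-1) ^ (k + 1)).prod := by
  let toR : ℤˣ →* R := (Int.castRingHom R : ℤ →* R).comp (Units.coeHom ℤ)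
  have cast_sign : toR (Perm.sign σ) = (σ.cycleType.map fun k => (-1 : R) ^ (k + 1)).prod := by
    rw [Perm.sign_of_cycleType', map_multiset_prod, Multiset.map_map]
    congr 1
    refine Multiset.map_congr rfl fun k _ => ?_
    simp [toR, pow_succ]
  rw [Perm.parts_partition, Multiset.map_add, Multiset.prod_add, ← cast_sign,
    Multiset.map_replicate]
  simp [toR]

end CycleLengths

section CentralizerCard

/-- The number `∏ k ^ c * c!`, over the distinct parts `k` of multiplicity `c`, usually written
`z_λ`: the order of the centralizer of a permutation with cycle lengths `s`, fixed points included
as cycles of length one. -/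
noncomputable def centralizerCard (s : Multiset ℕ) : ℕ :=
  (Multiset.toFinsupp s).prod fun k c => k ^ c * c !

theorem centralizerCard_add_of_disjoint {s t : Multiset ℕ} (h : Disjoint s t) :
    centralizerCard (s + t) = centralizerCard s * centralizerCard t := by
  rw [centralizerCard, Multiset.toFinsupp_add]
  exact Finsupp.prod_add_index_of_disjoint (Multiset.disjoint_toFinset.2 h) _

theorem centralizerCard_cons (k : ℕ) (s : Multiset ℕ) :
    centralizerCard (k ::ₘ s) = k * (s.count k + 1) * centralizerCard s := by
  have split (t : Multiset ℕ) : centralizerCard t = k ^ t.count k * (t.count k)! *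
      ((Multiset.toFinsupp t).erase k).prod fun k c => k ^ c * c ! :=
    (Finsupp.mul_prod_erase' _ k _ fun _ => by simp).symm
  have erase_cons : (Multiset.toFinsupp (k ::ₘ s)).erase k = (Multiset.toFinsupp s).erase k := by
    rw [← Multiset.singleton_add, Multiset.toFinsupp_add, Multiset.toFinsupp_singleton,
      Finsupp.erase_add, Finsupp.erase_single, zero_add]
  rw [split, split s, erase_cons, Multiset.count_cons_self, pow_succ, Nat.factorial_succ]
  ring

theorem centralizerCard_replicate_one (n : ℕ) :
    centralizerCard (Multiset.replicate n 1) = n ! := by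
  induction n with
  | zero => rfl
  | succ n ih =>
    rw [Multiset.replicate_succ, centralizerCard_cons, Multiset.count_replicate_self, ih,
      Nat.factorial_succ, one_mul]

theorem centralizerCard_pos {s : Multiset ℕ} (h : ∀ k ∈ s, 0 < k) : 0 < centralizerCard s :=
  Finset.prod_pos fun k hk =>
    Nat.mul_pos (Nat.pow_pos (h k (Multiset.mem_toFinset.1 hk))) (Nat.factorial_pos _)

theorem centralizerCard_eq_prod_mul (s : Multiset ℕ) :
    centralizerCard s = s.prod * ∏ k ∈ s.toFinset, (s.count k)! := by
  rw [prod_multiset_count, ← prod_mul_distrib]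
  rfl

theorem sum_filter_parts_add_sum_filter_not {n : ℕ} (p : n.Partition) (P : ℕ → Prop)
    [DecidablePred P] : (p.parts.filter P).sum + (p.parts.filter (¬ P ·)).sum = n := by
  rw [← Multiset.sum_add, Multiset.filter_add_not, p.parts_sum]

theorem parts_eq_filter_add_replicate {n : ℕ} (p : n.Partition) :
    p.parts = p.parts.filter (2 ≤ ·) +
      Multiset.replicate (n - (p.parts.filter (2 ≤ ·)).sum) 1 := by
  have small : p.parts.filter (fun k => ¬ 2 ≤ k) =
      Multiset.replicate (p.parts.filter fun k => ¬ 2 ≤ k).card 1 := by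
    refine Multiset.eq_replicate_card.2 fun k hk => ?_
    have hpos := p.parts_pos (Multiset.mem_of_mem_filter hk)
    have hlt := Multiset.of_mem_filter hk
    omega
  have sums := sum_filter_parts_add_sum_filter_not p (2 ≤ ·)
  rw [small, Multiset.sum_replicate, smul_eq_mul, mul_one] at sums
  have card_small : n - (p.parts.filter (2 ≤ ·)).sum = (p.parts.filter fun k => ¬ 2 ≤ k).card := by
    omega
  rw [card_small, ← small, Multiset.filter_add_not]

variable {α : Type*} [Fintype α] [DecidableEq α]

theorem partition_eq_iff_cycleType_eq (σ : Perm α) (p : (Fintype.card α).Partition) :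
    σ.partition = p ↔ σ.cycleType = p.parts.filter (2 ≤ ·) := by
  refine ⟨fun h => h ▸ Perm.filter_parts_partition_eq_cycleType.symm, fun h => ?_⟩
  rw [Nat.Partition.ext_iff, parts_eq_filter_add_replicate p, Perm.parts_partition,
    ← Perm.sum_cycleType, h]

theorem card_partition_eq_mul_centralizerCard (p : (Fintype.card α).Partition) :
    #{σ : Perm α | σ.partition = p} * centralizerCard p.parts = (Fintype.card α)! := by
  have hdisj : Disjoint (p.parts.filter (2 ≤ ·))
      (Multiset.replicate (Fintype.card α - (p.parts.filter (2 ≤ ·)).sum) 1) := by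
    refine Multiset.disjoint_left.2 fun hk hk' => ?_
    have := Multiset.of_mem_filter hk
    rw [Multiset.eq_of_mem_replicate hk'] at this
    omega
  have hsum : (p.parts.filter (2 ≤ ·)).sum ≤ Fintype.card α :=
    le_of_add_le_left (sum_filter_parts_add_sum_filter_not p (2 ≤ ·)).le
  have h := Perm.card_of_cycleType_mul_eq α (p.parts.filter (2 ≤ ·))
  rw [if_pos ⟨hsum, fun k => Multiset.of_mem_filter⟩] at h
  simp only [partition_eq_iff_cycleType_eq]
  rw [parts_eq_filter_add_replicate p, centralizerCard_add_of_disjoint hdisj,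
    centralizerCard_replicate_one, centralizerCard_eq_prod_mul, ← parts_eq_filter_add_replicate,
    ← h]
  ring

end CentralizerCard

section CycleTypeMean

variable {K : Type*} [Field K]

/-- The mean, over a uniformly random permutation of `n` points, of a function of the multiset of
cycle lengths, in which fixed points count as cycles of length one. -/
noncomputable def cycleTypeMean (f : Multiset ℕ → K) (n : ℕ) : K :=
  (∑ σ : Perm (Fin n), f σ.partition.parts) / n !

variable [CharZero K]

theorem sum_comp_partition {α : Type*} [Fintype α] [DecidableEq α] (f : Multiset ℕ → K) {n : ℕ}
    (hn : Fintype.card α = n) :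
    ∑ σ : Perm α, f σ.partition.parts =
      n ! * ∑ p : n.Partition, f p.parts / centralizerCard p.parts := by
  subst hn
  rw [← sum_fiberwise_of_maps_to fun σ _ => mem_univ σ.partition, mul_sum]
  refine sum_congr rfl fun p _ => ?_
  have hpos : (centralizerCard p.parts : K) ≠ 0 :=
    Nat.cast_ne_zero.2 (centralizerCard_pos fun _ => p.parts_pos).ne'
  have hfiber : ∀ σ ∈ ({σ | σ.partition = p} : Finset (Perm α)),
      f σ.partition.parts = f p.parts := fun σ hσ => by rw [(mem_filter.1 hσ).2]
  rw [sum_eq_card_nsmul hfiber, nsmul_eq_mul, ← card_partition_eq_mul_centralizerCard p,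
    Nat.cast_mul]
  field_simp

theorem cycleTypeMean_eq_sum_partition (f : Multiset ℕ → K) (n : ℕ) :
    cycleTypeMean f n = ∑ p : n.Partition, f p.parts / centralizerCard p.parts := by
  rw [cycleTypeMean, sum_comp_partition f (Fintype.card_fin n),
    mul_div_cancel_left₀ _ (Nat.cast_ne_zero.2 n.factorial_ne_zero)]

theorem cycleTypeMean_zero (f : Multiset ℕ → K) : cycleTypeMean f 0 = f 0 := by
  rw [cycleTypeMean_eq_sum_partition, Fintype.sum_unique,
    show (default : Nat.Partition 0).parts = 0 from rfl]
  simp [centralizerCard]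

theorem sum_count_partition_eq_cycleTypeMean (f : Multiset ℕ → K) {n k : ℕ} (hk : k ∈ Icc 1 n) :
    ∑ p : n.Partition, (k * p.parts.count k : K) * (f p.parts / centralizerCard p.parts) =
      cycleTypeMean (fun s => f (k ::ₘ s)) (n - k) := by
  obtain ⟨hk₁, hkn⟩ := mem_Icc.1 hk
  rw [cycleTypeMean_eq_sum_partition]
  have hvanish : ∀ p : n.Partition, p ∉ ({p | k ∈ p.parts} : Finset n.Partition) →
      (k * p.parts.count k : K) * (f p.parts / centralizerCard p.parts) = 0 := fun p hp => by
    rw [Multiset.count_eq_zero_of_notMem (by simpa using hp), Nat.cast_zero, mul_zero, zero_mul]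
  rw [← sum_subset (subset_univ {p : n.Partition | k ∈ p.parts}) fun p _ => hvanish p,
    sum_subtype _ (p := fun p : n.Partition => k ∈ p.parts) (by simp),
    ← (Nat.Partition.partitionWithPartEquiv hk₁ hkn).symm.sum_comp]
  refine sum_congr rfl fun p _ => ?_
  have hpos : (centralizerCard p.parts : K) ≠ 0 :=
    Nat.cast_ne_zero.2 (centralizerCard_pos fun _ => p.parts_pos).ne'
  have hk₀ : (k : K) ≠ 0 := Nat.cast_ne_zero.2 (Nat.pos_iff_ne_zero.1 hk₁)
  rw [Nat.Partition.partitionWithPartEquiv_symm_apply_parts, centralizerCard_cons,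
    Multiset.count_cons_self]
  push_cast
  have : (p.parts.count k + 1 : K) ≠ 0 := Nat.cast_add_one_ne_zero _
  field_simp

theorem mul_cycleTypeMean (f : Multiset ℕ → K) (n : ℕ) :
    n * cycleTypeMean f n = ∑ k ∈ Icc 1 n, cycleTypeMean (fun s => f (k ::ₘ s)) (n - k) := by
  have hsum (p : n.Partition) : (n : K) = ∑ k ∈ Icc 1 n, (k * p.parts.count k : K) := by
    have hparts : p.parts.toFinset ⊆ Icc 1 n := fun k hk =>
      have hk := Multiset.mem_toFinset.1 hk
      mem_Icc.2 ⟨p.parts_pos hk, p.le_of_mem_parts hk⟩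
    have := sum_multiset_count_of_subset p.parts (Icc 1 n) hparts
    rw [p.parts_sum] at this
    exact_mod_cast this.trans (sum_congr rfl fun k _ => mul_comm _ _)
  rw [cycleTypeMean_eq_sum_partition, mul_sum]
  calc ∑ p : n.Partition, (n : K) * (f p.parts / centralizerCard p.parts)
      = ∑ p : n.Partition, ∑ k ∈ Icc 1 n,
          (k * p.parts.count k : K) * (f p.parts / centralizerCard p.parts) :=
        sum_congr rfl fun p _ => by rw [← sum_mul, ← hsum]
    _ = ∑ k ∈ Icc 1 n, cycleTypeMean (fun s => f (k ::ₘ s)) (n - k) := by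
        rw [sum_comm]
        exact sum_congr rfl fun k hk => sum_count_partition_eq_cycleTypeMean f hk

end CycleTypeMean

section CycleIndex

variable {K : Type*} [Field K] (w : ℕ → K)

/-- The cycle index of the symmetric group of degree `n`, evaluated at the weights `w`: the mean
over all permutations of the product of `w k` over the lengths `k` of all cycles. -/
noncomputable def cycleIndex (n : ℕ) : K :=
  cycleTypeMean (fun s => (s.map w).prod) n

variable [CharZero K]

theorem cycleIndex_zero : cycleIndex w 0 = 1 := by
  simp [cycleIndex, cycleTypeMean_zero]

theorem mul_cycleIndex (n : ℕ) :
    n * cycleIndex w n = ∑ j ∈ range n, w (n - j) * cycleIndex w j := by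
  have hcons (k m : ℕ) : cycleTypeMean (fun s => ((k ::ₘ s).map w).prod) m =
      w k * cycleIndex w m := by
    simp only [cycleIndex, cycleTypeMean, Multiset.map_cons, Multiset.prod_cons, ← mul_sum,
      mul_div_assoc]
  rw [cycleIndex, mul_cycleTypeMean]
  simp only [hcons]
  refine sum_nbij' (fun k => n - k) (fun j => n - j) ?_ ?_ ?_ ?_ ?_ <;> intro k hk <;>
    simp only [mem_Icc, mem_range] at hk ⊢ <;> try omega
  rw [Nat.sub_sub_self hk.2]

theorem cycleIndex_pow_mul (c : K) (n : ℕ) :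
    cycleIndex (fun k => c ^ k * w k) n = c ^ n * cycleIndex w n := by
  have prod_map_pow_left (s : Multiset ℕ) : (s.map (HPow.hPow c)).prod = c ^ s.sum := by
    induction s using Multiset.induction_on with
    | empty => simp
    | cons k s ih => rw [Multiset.map_cons, Multiset.prod_cons, ih, Multiset.sum_cons, pow_add]
  simp only [cycleIndex, cycleTypeMean_eq_sum_partition, mul_sum, Multiset.prod_map_mul]
  refine sum_congr rfl fun p _ => ?_
  rw [prod_map_pow_left, p.parts_sum, mul_div_assoc]

theorem abs_cycleIndex_le (w : ℕ → ℝ) (n : ℕ) :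
    |cycleIndex w n| ≤ cycleIndex (fun k => |w k|) n := by
  simp only [cycleIndex, cycleTypeMean, abs_div, Nat.abs_cast]
  gcongr
  refine (abs_sum_le_sum_abs _ _).trans_eq (sum_congr rfl fun σ _ => ?_)
  exact (map_multiset_prod (absHom : ℝ →*₀ ℝ) _).trans (by rw [Multiset.map_map]; rfl)

end CycleIndex

section Splitting

theorem prod_map_ite_zero {α R : Type*} [CommMonoidWithZero R] (w : α → R) (P : α → Prop)
    [DecidablePred P] (s : Multiset α) [Decidable (∀ k ∈ s, P k)] :
    (s.map fun k => if P k then w k else 0).prod =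
      if ∀ k ∈ s, P k then (s.map w).prod else 0 := by
  split_ifs with hs
  · rw [Multiset.map_congr rfl fun k hk => if_pos (hs k hk)]
  · push Not at hs
    obtain ⟨k, hk, hPk⟩ := hs
    exact Multiset.prod_eq_zero (Multiset.mem_map.2 ⟨k, hk, if_neg hPk⟩)

theorem filter_add_of_forall {α : Type*} {P : α → Prop} [DecidablePred P] {s t : Multiset α}
    (hs : ∀ k ∈ s, P k) (ht : ∀ k ∈ t, ¬ P k) : (s + t).filter P = s := by
  rw [Multiset.filter_add, Multiset.filter_eq_self.2 hs, Multiset.filter_eq_nil.2 ht, add_zero]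

variable {K : Type*} [Field K] [CharZero K] (w : ℕ → K) (P : ℕ → Prop) [DecidablePred P]

theorem cycleIndex_ite_zero (n : ℕ) :
    cycleIndex (fun k => if P k then w k else 0) n =
      ∑ p : n.Partition with ∀ k ∈ p.parts, P k,
        (p.parts.map w).prod / centralizerCard p.parts := by
  rw [cycleIndex, cycleTypeMean_eq_sum_partition, sum_filter]
  simp only [prod_map_ite_zero, ite_div, zero_div]

theorem sum_partition_filter_sum_eq (i j : ℕ) :
    ∑ p : (i + j).Partition with (p.parts.filter P).sum = i,
        (p.parts.map w).prod / centralizerCard p.parts =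
      cycleIndex (fun k => if P k then w k else 0) i *
        cycleIndex (fun k => if ¬ P k then w k else 0) j := by
  let merge (q : i.Partition × j.Partition) : (i + j).Partition :=
    ⟨q.1.parts + q.2.parts,
      fun hk => (Multiset.mem_add.1 hk).elim (q.1.parts_pos ·) (q.2.parts_pos ·),
      by rw [Multiset.sum_add, q.1.parts_sum, q.2.parts_sum]⟩
  rw [cycleIndex_ite_zero, cycleIndex_ite_zero, sum_mul_sum, ← sum_product']
  have homogeneous (q : i.Partition × j.Partition)
      (hq : q ∈ (univ.filter fun p : i.Partition => ∀ k ∈ p.parts, P k) ×ˢ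
        univ.filter fun p : j.Partition => ∀ k ∈ p.parts, ¬ P k) :
      (∀ k ∈ q.1.parts, P k) ∧ ∀ k ∈ q.2.parts, ¬ P k := by simpa using hq
  symm
  refine sum_nbij merge (fun q hq => ?_) (fun q hq q' hq' h => ?_) (fun p hp => ?_) fun q hq => ?_
  · obtain ⟨hq₁, hq₂⟩ := homogeneous q hq
    rw [mem_filter_univ]
    exact (congrArg _ (filter_add_of_forall hq₁ hq₂)).trans q.1.parts_sum
  · obtain ⟨hq₁, hq₂⟩ := homogeneous q hq
    obtain ⟨hq₁', hq₂'⟩ := homogeneous q' hq'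
    have hparts : q.1.parts + q.2.parts = q'.1.parts + q'.2.parts := congrArg (·.parts) h
    have hfst : q.1.parts = q'.1.parts := by
      rw [← filter_add_of_forall hq₁ hq₂, hparts, filter_add_of_forall hq₁' hq₂']
    rw [hfst, add_right_inj] at hparts
    exact Prod.ext (Nat.Partition.ext hfst) (Nat.Partition.ext hparts)
  · have hi : (p.parts.filter P).sum = i := (mem_filter.1 hp).2
    have hj : (p.parts.filter (¬ P ·)).sum = j := by
      simpa only [hi, Nat.add_left_cancel_iff] using sum_filter_parts_add_sum_filter_not p P
    refine ⟨(⟨_, fun hk => p.parts_pos (Multiset.mem_of_mem_filter hk), hi⟩,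
      ⟨_, fun hk => p.parts_pos (Multiset.mem_of_mem_filter hk), hj⟩), ?_,
      Nat.Partition.ext (Multiset.filter_add_not P p.parts)⟩
    simp
  · obtain ⟨hq₁, hq₂⟩ := homogeneous q hq
    have hdisj : Disjoint q.1.parts q.2.parts :=
      Multiset.disjoint_left.2 fun hk hk' => hq₂ _ hk' (hq₁ _ hk)
    rw [div_mul_div_comm, ← Multiset.prod_add, ← Multiset.map_add, ← Nat.cast_mul,
      ← centralizerCard_add_of_disjoint hdisj]

theorem cycleTypeMean_filter_sum_mul_prod (g : ℕ → K) (n : ℕ) :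
    cycleTypeMean (fun s => g (s.filter P).sum * (s.map w).prod) n =
      ∑ ij ∈ antidiagonal n, g ij.1 * (cycleIndex (fun k => if P k then w k else 0) ij.1 *
        cycleIndex (fun k => if ¬ P k then w k else 0) ij.2) := by
  have maps : ∀ p ∈ (univ : Finset n.Partition),
      ((p.parts.filter P).sum, (p.parts.filter (¬ P ·)).sum) ∈ antidiagonal n := fun p _ =>
    HasAntidiagonal.mem_antidiagonal.2 (sum_filter_parts_add_sum_filter_not p P)
  rw [cycleTypeMean_eq_sum_partition, ← sum_fiberwise_of_maps_to maps]
  refine sum_congr rfl fun ⟨i, j⟩ hij => ?_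
  obtain rfl := HasAntidiagonal.mem_antidiagonal.1 hij
  rw [← sum_partition_filter_sum_eq, mul_sum]
  have fiber (p : (i + j).Partition) :
      ((p.parts.filter P).sum, (p.parts.filter (¬ P ·)).sum) = (i, j) ↔
        (p.parts.filter P).sum = i := by
    have := sum_filter_parts_add_sum_filter_not p P
    rw [Prod.mk_inj]
    omega
  simp only [fiber]
  refine sum_congr rfl fun p hp => ?_
  rw [(mem_filter.1 hp).2, mul_div_assoc]

end Splitting

section NonMultiples

theorem succ_mul_multichoose_succ {R : Type*} [CommRing R] [BinomialRing R] (a : R) (k : ℕ) :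
    (k + 1) * Ring.multichoose a (k + 1) = (a + k) * Ring.multichoose a k := by
  have := BinomialRing.toIsAddTorsionFree (R := R)
  refine nsmul_right_injective k.factorial_ne_zero ?_
  have hsucc := Ring.factorial_nsmul_multichoose_eq_ascPochhammer a (k + 1)
  rw [Nat.factorial_succ, ascPochhammer_succ_right, Polynomial.smeval_mul,
    ← Ring.factorial_nsmul_multichoose_eq_ascPochhammer] at hsucc
  simp only [nsmul_eq_mul, Polynomial.smeval_add, Polynomial.smeval_X, pow_one,
    Polynomial.smeval_natCast, pow_zero, mul_one] at hsucc ⊢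
  push_cast at hsucc
  linear_combination hsucc

theorem sum_range_add_sum_range_shift {M : Type*} [AddCommMonoid M] (g : ℕ → M) (r b : ℕ) :
    ∑ i ∈ range b, g (r + i) + ∑ s ∈ range r, g s =
      ∑ s ∈ range b, g s + ∑ s ∈ range r, g (b + s) := by
  rw [add_comm, ← sum_range_add, add_comm r, sum_range_add]

variable {K : Type*} [Field K] [CharZero K] {b : ℕ} {θ μ : K}

theorem mul_cycleIndex_add_of_periodic {w : ℕ → K} (hw : Periodic w b) (m : ℕ) :
    (m + b : ℕ) * cycleIndex w (m + b) =
      m * cycleIndex w m + ∑ i ∈ range b, w (b - i) * cycleIndex w (m + i) := by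
  rw [mul_cycleIndex, sum_range_add, mul_cycleIndex]
  congr 1
  · refine sum_congr rfl fun j hj => ?_
    rw [Nat.sub_add_comm (mem_range.1 hj).le, hw]
  · simp only [Nat.add_sub_add_left]

theorem mul_cycleIndex_nonmultiples_of_lt {m : ℕ} (hm : m < b) :
    m * cycleIndex (fun k => if b ∣ k then 0 else θ) m =
      θ * ∑ j ∈ range m, cycleIndex (fun k => if b ∣ k then 0 else θ) j := by
  rw [mul_cycleIndex, mul_sum]
  refine sum_congr rfl fun j hj => ?_
  have := mem_range.1 hj
  rw [if_neg (Nat.not_dvd_of_pos_of_lt (by omega) (by omega))]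

theorem mul_cycleIndex_nonmultiples_add (hb : 0 < b) (m : ℕ) :
    (m + b : ℕ) * cycleIndex (fun k => if b ∣ k then 0 else θ) (m + b) =
      m * cycleIndex (fun k => if b ∣ k then 0 else θ) m +
        θ * (∑ i ∈ range b, cycleIndex (fun k => if b ∣ k then 0 else θ) (m + i) -
          cycleIndex (fun k => if b ∣ k then 0 else θ) m) := by
  rw [mul_cycleIndex_add_of_periodic fun k => by simp only [Nat.dvd_add_self_right],
    range_eq_Ico, sum_eq_sum_Ico_succ_bot hb, sum_eq_sum_Ico_succ_bot hb, Nat.sub_zero,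
    if_pos dvd_rfl, zero_mul, zero_add, add_zero, add_sub_cancel_left, mul_sum]
  congr 1
  refine sum_congr rfl fun i hi => ?_
  have := mem_Ico.1 hi
  rw [if_neg (Nat.not_dvd_of_pos_of_lt (by omega) (by omega))]

theorem cycleIndex_nonmultiples_of_lt {δ : ℕ → K} (hδ₀ : δ 0 = 1)
    (hδ : ∀ r < b, θ * ∑ s ∈ range r, δ s = r * δ r) (r : ℕ) (hr : r < b) :
    cycleIndex (fun k => if b ∣ k then 0 else θ) r = δ r := by
  induction r using Nat.strong_induction_on with
  | _ r ih =>
    rcases r.eq_zero_or_pos with rfl | hr₀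
    · rw [cycleIndex_zero, hδ₀]
    · refine mul_left_cancel₀ (Nat.cast_ne_zero.2 hr₀.ne' : (r : K) ≠ 0) ?_
      rw [mul_cycleIndex_nonmultiples_of_lt hr, ← hδ r hr]
      congr 1
      exact sum_congr rfl fun s hs => ih s (mem_range.1 hs) ((mem_range.1 hs).trans hr)

-- The generating function is `(1 - x)^(-θ) * (1 - x^b)^(θ / b)`. When it factors as `δ(x) * c(x^b)`
-- with `δ` a polynomial of degree less than `b`, these are its coefficients.
theorem cycleIndex_nonmultiples_mul_add (hb : 0 < b) {δ : ℕ → K} (hδ₀ : δ 0 = 1)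
    (hδ : ∀ r < b, θ * ∑ s ∈ range r, δ s = r * δ r)
    (hμ : ∀ r < b, θ * (∑ s ∈ range b, δ s - δ r) = μ * δ r) (k r : ℕ) (hr : r < b) :
    cycleIndex (fun k => if b ∣ k then 0 else θ) (b * k + r) =
      δ r * Ring.multichoose (μ / b) k := by
  set Z := cycleIndex fun k => if b ∣ k then 0 else θ with hZ
  set c := Ring.multichoose (μ / b) with hc
  induction k generalizing r with
  | zero =>
    rw [hZ, mul_zero, zero_add, cycleIndex_nonmultiples_of_lt hδ₀ hδ r hr, hc,
      Ring.multichoose_zero_right, mul_one]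
  | succ k ihk =>
    induction r using Nat.strong_induction_on with
    | _ r ihr =>
      have hlow : ∀ s ∈ range b, Z (b * k + s) = δ s * c k := fun s hs => ihk s (mem_range.1 hs)
      have hhigh : ∀ s ∈ range r, Z (b * k + (b + s)) = δ s * c (k + 1) := fun s hs => by
        rw [← add_assoc, ← Nat.mul_succ]
        exact ihr s (mem_range.1 hs) ((mem_range.1 hs).trans hr)
      have hwindow := sum_range_add_sum_range_shift (fun t => Z (b * k + t)) r b
      rw [sum_congr rfl hlow, sum_congr rfl hhigh,
        sum_congr rfl fun s hs => hlow s (range_mono hr.le hs)] at hwindow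
      simp only [← sum_mul, ← add_assoc] at hwindow
      have hrec := mul_cycleIndex_nonmultiples_add (θ := θ) hb (b * k + r)
      rw [← hZ, ihk r hr] at hrec
      have hstep : (b * (k + 1) : K) * c (k + 1) = (b * k + μ) * c k := by
        have hb₀ : (b : K) ≠ 0 := Nat.cast_ne_zero.2 hb.ne'
        linear_combination (b : K) * succ_mul_multichoose_succ (μ / b) k +
          c k * mul_div_cancel₀ μ hb₀
      rw [show b * (k + 1) + r = b * k + r + b by ring]
      refine mul_left_cancel₀ (Nat.cast_ne_zero.2 (by omega) : ((b * k + r + b : ℕ) : K) ≠ 0) ?_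
      refine hrec.trans ?_
      push_cast
      linear_combination θ * hwindow + c k * hμ r hr + (c (k + 1) - c k) * hδ r hr - δ r * hstep

end NonMultiples

section SignedMean

theorem multichoose_nonneg {a : ℝ} (ha : 0 ≤ a) (k : ℕ) : 0 ≤ Ring.multichoose a k := by
  induction k with
  | zero => rw [Ring.multichoose_zero_right]; exact zero_le_one
  | succ k ih =>
    refine nonneg_of_mul_nonneg_right ?_ (k.cast_add_one_pos : (0 : ℝ) < k + 1)
    rw [succ_mul_multichoose_succ]
    positivity

theorem mul_multichoose_succ_le {a c : ℝ} (ha : 0 ≤ a) (hac : a ≤ c) (k : ℕ) :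
    c * Ring.multichoose a (k + 1) ≤ a * Ring.multichoose c (k + 1) := by
  induction k with
  | zero => rw [zero_add, Ring.multichoose_one_right, Ring.multichoose_one_right, mul_comm]
  | succ k ih =>
    refine le_of_mul_le_mul_left ?_ (by positivity : (0 : ℝ) < (k + 1 : ℕ) + 1)
    rw [mul_left_comm, mul_left_comm _ a, succ_mul_multichoose_succ, succ_mul_multichoose_succ]
    calc c * ((a + (k + 1 : ℕ)) * Ring.multichoose a (k + 1))
        = (a + (k + 1 : ℕ)) * (c * Ring.multichoose a (k + 1)) := mul_left_comm ..
      _ ≤ (c + (k + 1 : ℕ)) * (a * Ring.multichoose c (k + 1)) := by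
          have hc : 0 ≤ c := ha.trans hac
          have ha' : 0 ≤ Ring.multichoose a (k + 1) := multichoose_nonneg ha _
          gcongr
      _ = a * ((c + (k + 1 : ℕ)) * Ring.multichoose c (k + 1)) := mul_left_comm ..

variable {b : ℕ}

theorem cycleIndex_one_nonmultiples (hb : 0 < b) (k : ℕ) {r : ℕ} (hr : r < b) :
    cycleIndex (fun k => if b ∣ k then 0 else (1 : ℝ)) (b * k + r) =
      Ring.multichoose ((b - 1 : ℝ) / b) k := by
  rw [cycleIndex_nonmultiples_mul_add (δ := 1) (μ := (b - 1 : ℝ)) hb rfl (by simp) (by simp) k r hr,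
    Pi.one_apply, one_mul]

theorem cycleIndex_neg_one_nonmultiples (hb : 2 ≤ b) (k : ℕ) {r : ℕ} (hr : r < b) :
    cycleIndex (fun k => if b ∣ k then 0 else (-1 : ℝ)) (b * k + r) =
      (if r = 0 then 1 else if r = 1 then -1 else 0) * Ring.multichoose (1 / b : ℝ) k := by
  have partial_sum (r : ℕ) : ∑ s ∈ range r, (if s = 0 then 1 else if s = 1 then -1 else 0 : ℝ) =
      if r = 1 then 1 else 0 := by
    rcases r with - | - | r
    · simp
    · simp
    · rw [sum_range_succ', sum_range_succ']
      simp
  refine cycleIndex_nonmultiples_mul_add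
    (δ := fun s => if s = 0 then 1 else if s = 1 then -1 else 0) (by omega) (if_pos rfl)
    (fun r _ => ?_) (fun r _ => ?_) k r hr
  · rw [partial_sum]
    rcases r with - | - | r <;> simp
  · rw [partial_sum, if_neg (by omega)]
    ring

theorem sub_one_mul_abs_cycleIndex_neg_one_le (hb : 2 ≤ b) {m : ℕ} (hm : 2 ≤ m) :
    (b - 1 : ℝ) * |cycleIndex (fun k => if b ∣ k then 0 else (-1 : ℝ)) m| ≤
      cycleIndex (fun k => if b ∣ k then 0 else (1 : ℝ)) m := by
  have hb' : (2 : ℝ) ≤ b := Nat.ofNat_le_cast.2 hb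
  have hr : m % b < b := Nat.mod_lt m (by omega)
  rw [← Nat.div_add_mod m b, cycleIndex_one_nonmultiples (by omega) _ hr,
    cycleIndex_neg_one_nonmultiples hb _ hr, abs_mul,
    abs_of_nonneg (multichoose_nonneg (by positivity) _)]
  rcases hk : m / b with - | k
  · rw [Nat.mod_eq_of_lt ((Nat.div_eq_zero_iff_lt (by omega)).1 hk), if_neg (by omega),
      if_neg (by omega), abs_zero, zero_mul, mul_zero, Ring.multichoose_zero_right]
    exact zero_le_one
  · have hδ : |(if m % b = 0 then 1 else if m % b = 1 then -1 else 0 : ℝ)| ≤ 1 := by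
      split_ifs <;> simp
    have hle : (1 / b : ℝ) ≤ (b - 1) / b := by gcongr; linarith
    have hcompare := mul_multichoose_succ_le (by positivity) hle k
    have hnonneg := multichoose_nonneg (by positivity : (0 : ℝ) ≤ 1 / b) (k + 1)
    rw [div_mul_eq_mul_div, div_mul_eq_mul_div, div_le_div_iff_of_pos_right (by positivity),
      one_mul] at hcompare
    refine le_trans ?_ hcompare
    gcongr
    · linarith
    · exact mul_le_of_le_one_left hnonneg hδ

theorem sub_one_mul_abs_cycleIndex_sign_le (hb : 2 ≤ b) {m : ℕ} (hm : 2 ≤ m) :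
    (b - 1 : ℝ) * |cycleIndex (fun k => if b ∣ k then 0 else (-1 : ℝ) ^ (k + 1)) m| ≤
      cycleIndex (fun k => if b ∣ k then 0 else (1 : ℝ)) m := by
  have sign_weight : (fun k => if b ∣ k then 0 else (-1 : ℝ) ^ (k + 1)) =
      fun k => (-1) ^ k * if b ∣ k then 0 else (-1 : ℝ) := by
    simp only [mul_ite, mul_zero, pow_succ]
  rw [sign_weight, cycleIndex_pow_mul, abs_mul, abs_neg_one_pow, one_mul]
  exact sub_one_mul_abs_cycleIndex_neg_one_le hb hm

end SignedMean

section Proportion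

variable {b n : ℕ}

/-- `i = j * b` for some integer `j` with `1 ≤ j ≤ 4√n / (3b)`: the numbers of points which
`ubProp b n` allows in the cycles of length divisible by `b`. -/
def IsAdmissible (b n i : ℕ) : Prop :=
  ∃ j : ℕ, 1 ≤ j ∧ (j : ℝ) ≤ 4 * √n / (3 * b) ∧ i = j * b

theorem IsAdmissible.add_two_le {i : ℕ} (hb : 3 ≤ b) (h : IsAdmissible b n i) : i + 2 ≤ n := by
  obtain ⟨j, hj, hjn, rfl⟩ := h
  rw [le_div_iff₀ (by positivity)] at hjn
  have hsq : √n * √n = n := Real.mul_self_sqrt n.cast_nonneg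
  have hbj : (3 : ℝ) ≤ j * b := mod_cast Nat.mul_le_mul hj hb
  have hsqrt : 9 / 4 ≤ √n := by linarith
  have : (j * b + 2 : ℝ) ≤ n := by nlinarith [hsqrt]
  exact_mod_cast this

theorem ubProp_iff (σ : Perm (Fin n)) :
    ubProp b n σ ↔ IsAdmissible b n (σ.partition.parts.filter (b ∣ ·)).sum ∧
      ∀ k ∈ σ.partition.parts, ¬ 2 * b ∣ k := by
  have lengths (k : ℕ) : (¬ (b ∣ k ∧ ¬ 2 * b ∣ k) → ¬ b ∣ k) ↔ ¬ 2 * b ∣ k :=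
    ⟨fun h h₂ => h (fun h' => h'.2 h₂) (dvd_of_mul_left_dvd h₂), fun h₂ h hb => h ⟨hb, h₂⟩⟩
  simp only [ubProp, lengths, IsAdmissible, ← card_filter_minimalPeriod,
    ← forall_minimalPeriod_iff σ fun k => ¬ 2 * b ∣ k, ← exists_and_right, and_assoc]
  refine exists_congr fun j => and_congr_right fun _ => and_congr_right fun _ =>
    and_congr_left fun h => ?_
  simp only [h, not_false_eq_true, and_true]

/-- The mean over `Sym_n` of the class function with value `∏ χ k` over the cycle lengths `k`,
restricted to the permutations with `ubProp b n`. -/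
noncomputable def weightedUb (b n : ℕ) (χ : ℕ → ℝ) : ℝ :=
  (∑ σ with ubProp b n σ, (σ.partition.parts.map χ).prod) / n !

theorem weightedUb_eq_sum_antidiagonal (χ : ℕ → ℝ) :
    weightedUb b n χ = ∑ ij ∈ antidiagonal n, if IsAdmissible b n ij.1 then
      cycleIndex (fun k => if b ∣ k ∧ ¬ 2 * b ∣ k then χ k else 0) ij.1 *
        cycleIndex (fun k => if b ∣ k then 0 else χ k) ij.2 else 0 := by
  have indicator (σ : Perm (Fin n)) :
      (if ubProp b n σ then (σ.partition.parts.map χ).prod else 0) =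
        (if IsAdmissible b n (σ.partition.parts.filter (b ∣ ·)).sum then 1 else 0) *
          (σ.partition.parts.map fun k => if ¬ 2 * b ∣ k then χ k else 0).prod := by
    rw [prod_map_ite_zero χ (¬ 2 * b ∣ ·), ite_zero_mul_ite_zero, one_mul]
    simp only [ubProp_iff]
  have weights (k : ℕ) : (if ¬ b ∣ k then if ¬ 2 * b ∣ k then χ k else 0 else 0) =
      if b ∣ k then 0 else χ k := by
    by_cases hk : b ∣ k
    · simp [hk]
    · have hk₂ : ¬ 2 * b ∣ k := mt dvd_of_mul_left_dvd hk
      simp [hk, hk₂]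
  simp only [weightedUb, sum_filter, indicator]
  refine (cycleTypeMean_filter_sum_mul_prod (fun k => if ¬ 2 * b ∣ k then χ k else 0) (b ∣ ·)
    (fun i => if IsAdmissible b n i then 1 else 0) n).trans ?_
  simp only [weights, ite_and, ite_mul, one_mul, zero_mul]

theorem sub_one_mul_abs_weightedUb_sign_le (hb : 3 ≤ b) :
    (b - 1 : ℝ) * |weightedUb b n fun k => (-1) ^ (k + 1)| ≤ weightedUb b n 1 := by
  have hb₁ : (0 : ℝ) ≤ b - 1 := sub_nonneg.2 (Nat.one_le_cast.2 (by omega))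
  rw [weightedUb_eq_sum_antidiagonal, weightedUb_eq_sum_antidiagonal]
  refine (mul_le_mul_of_nonneg_left (abs_sum_le_sum_abs _ _) hb₁).trans ?_
  rw [mul_sum]
  refine sum_le_sum fun ⟨i, j⟩ hij => ?_
  split_ifs with hi
  · have hj : 2 ≤ j := by
      have := hi.add_two_le hb
      have := HasAntidiagonal.mem_antidiagonal.1 hij
      dsimp only at *
      omega
    have hi_le : |cycleIndex (fun k => if b ∣ k ∧ ¬ 2 * b ∣ k then (-1 : ℝ) ^ (k + 1) else 0) i| ≤
        cycleIndex (fun k => if b ∣ k ∧ ¬ 2 * b ∣ k then (1 : ℝ) else 0) i := by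
      refine (abs_cycleIndex_le _ i).trans_eq ?_
      simp only [apply_ite abs, abs_neg_one_pow, abs_zero]
    have hj_le := sub_one_mul_abs_cycleIndex_sign_le (by omega : 2 ≤ b) hj
    rw [abs_mul, mul_left_comm]
    exact mul_le_mul hi_le hj_le (by positivity) ((abs_nonneg _).trans hi_le)
  · rw [abs_zero, mul_zero]

theorem ub_eq_weightedUb_one : ub b n = weightedUb b n 1 := by
  simp [ub, weightedUb]

theorem ub_eq_zero_of_lt_two (hb : 3 ≤ b) (hn : n < 2) : ub b n = 0 := by
  have hnone : ∀ σ ∈ (univ : Finset (Perm (Fin n))), ¬ ubProp b n σ := fun σ _ hσ => by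
    have := ((ubProp_iff σ).1 hσ).1.add_two_le hb
    omega
  rw [ub, filter_false_of_mem hnone, card_empty, Nat.cast_zero, zero_div]

theorem utb_eq_ub_add_weightedUb_sign (hn : 2 ≤ n) :
    utb b n = ub b n + weightedUb b n fun k => (-1) ^ (k + 1) := by
  have : Nontrivial (Fin n) := Fin.nontrivial_iff_two_le.2 hn
  have hcard : (2 * Fintype.card (alternatingGroup (Fin n)) : ℝ) = n ! := by
    have := two_mul_card_alternatingGroup (α := Fin n)
    rw [Fintype.card_perm, Fintype.card_fin] at this
    exact_mod_cast this
  have heven (σ : Perm (Fin n)) : (1 + (σ.partition.parts.map fun k => (-1 : ℝ) ^ (k + 1)).prod) =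
      if σ ∈ alternatingGroup (Fin n) then 2 else 0 := by
    rw [← sign_eq_prod_parts, Perm.mem_alternatingGroup]
    rcases Int.units_eq_one_or (Perm.sign σ) with h | h <;> rw [h]
    · norm_num
    · simp [show ¬ (-1 : ℤˣ) = 1 by decide]
  have hsum : (#{σ : Perm (Fin n) | ubProp b n σ} : ℝ) +
      ∑ σ with ubProp b n σ, (σ.partition.parts.map fun k => (-1 : ℝ) ^ (k + 1)).prod =
        2 * #{σ : Perm (Fin n) | σ ∈ alternatingGroup (Fin n) ∧ ubProp b n σ} := by
    rw [card_eq_sum_ones, Nat.cast_sum, ← sum_add_distrib]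
    simp only [Nat.cast_one, heven, ← sum_filter, filter_filter, sum_const, nsmul_eq_mul]
    rw [mul_comm]
    simp only [and_comm]
  rw [ub, weightedUb, ← add_div, hsum, ← hcard, mul_div_mul_left _ _ two_ne_zero, utb]

end Proportion

end CycleIndex

/-- For all `b ≥ 2` and `n ≥ 1`, `ũ_b(n) ≥ (1 − 1/(b−1)) · u_b(n)`. -/
theorem utb_ge_ub (b n : ℕ) (hb : 2 ≤ b) (hn : 1 ≤ n) :
    (1 - 1 / ((b : ℝ) - 1)) * ub b n ≤ utb b n := by
  have hutb : 0 ≤ utb b n := by rw [utb]; positivity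
  rcases hb.eq_or_lt with rfl | hb
  · norm_num [hutb]
  rcases lt_or_ge n 2 with hn₂ | hn₂
  · rw [CycleIndex.ub_eq_zero_of_lt_two hb hn₂, mul_zero]
    exact hutb
  have hb₁ : (0 : ℝ) < b - 1 := sub_pos.2 (Nat.one_lt_cast.2 (by omega))
  have hsigned := CycleIndex.sub_one_mul_abs_weightedUb_sign_le (n := n) hb
  rw [← CycleIndex.ub_eq_weightedUb_one, ← le_div_iff₀' hb₁] at hsigned
  rw [CycleIndex.utb_eq_ub_add_weightedUb_sign hn₂, sub_mul, one_div_mul_eq_div]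
  linarith [neg_le_of_abs_le hsigned]
end

section
/- Let n ≥ 9 be a natural number, let G be either Alt_n or Sym_n, let 0 < ε < 1, and set T := ⌈13 · log(n) · log(ε^{−1})⌉, where log is the natural logarithm. If x_1, …, x_T are independent, uniformly distributed random elements of G, then with probability at least 1 − ε there is some i such that x_i has even order and the power x_i^(|x_i|/2) moves at most ⌊4√n/3⌋ points. -/
open scoped Classical

/-!
Fix a power of two `b = 2 ^ k ≤ 4√n/3` and call `x` good if its points on cycles of length
divisible by `b` form a single `b`-cycle. If `x` is good then `2 ^ k ∣ |x|`, and a point moved by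
`x ^ (|x| / 2)` has period divisible by `2 ^ k`, so that this power moves at most `b` points.

The number of pointed `b`-cycles of a random `x` has mean `1`, because it counts the embeddings of
`ZMod b` that intertwine `1 + ·` with `x`, and `G` is transitive on embeddings. Likewise the
number of pairs of a pointed `b`-cycle and a pointed `jb`-cycle distinct from it has mean at most
`1`, or at most `2` when only `Sym_n` is known to be transitive, namely for `j = ⌊n/b⌋ - 1`. A
pointed `b`-cycle of an `x` that is not good belongs to at least `jb` such pairs for some `j`.
Hence `x` is good with probability at least `(b - (H_{⌊n/b⌋ - 1} + 1)) / b²`, where `H_m` is the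
harmonic number, and this is at least `1 / (13 log n)` for `b = 4` if `n < 36` and for `b` either
`8` or between `3/2 log n` and `3 log n` otherwise.
-/

open Finset Function MulAction

section Transporters

variable {G X : Type*} [Group G] [Fintype G] [Fintype X] [MulAction G X] [IsPretransitive G X]

theorem card_filter_smul_eq (a b : X) :
    #{g : G | g • a = b} = Fintype.card G / Fintype.card X := by
  obtain ⟨h, rfl⟩ := exists_smul_eq G a b
  have card_transporter : #{g : G | g • a = h • a} = Nat.card (stabilizer G a) := by
    rw [← Fintype.card_subtype, ← Nat.card_eq_fintype_card]
    exact Nat.card_congr ((Equiv.mulLeft h⁻¹).subtypeEquiv fun g => by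
      simp [mul_smul, inv_smul_eq_iff])
  have orbit_stabilizer := (stabilizer G a).card_mul_index
  rw [index_stabilizer_of_transitive, Nat.card_eq_fintype_card (α := X),
    Nat.card_eq_fintype_card (α := G)] at orbit_stabilizer
  rw [card_transporter, ← orbit_stabilizer,
    Nat.mul_div_cancel _ (Fintype.card_pos_iff.2 ⟨a⟩)]

theorem sum_card_filter_smul_eq_apply [Nonempty X] (r : X → X) :
    ∑ g : G, #{a : X | g • a = r a} = Fintype.card G := by
  have card_dvd : Fintype.card X ∣ Fintype.card G := by
    inhabit X
    simpa only [Nat.card_eq_fintype_card, index_stabilizer_of_transitive]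
      using (stabilizer G (default : X)).index_dvd_card
  calc ∑ g : G, #{a : X | g • a = r a} = ∑ a : X, #{g : G | g • a = r a} :=
        sum_card_bipartiteAbove_eq_sum_card_bipartiteBelow _
    _ = Fintype.card G := by
      simp only [card_filter_smul_eq, sum_const, card_univ, smul_eq_mul,
        Nat.mul_div_cancel' card_dvd]

end Transporters

section EquivariantEmbeddings

variable {ι κ α : Type*}

/-- The embeddings `a : ι ↪ α` that intertwine the self-map `r` of `ι` with the self-map `x` of
`α`. When `r` is the shift `1 + ·` of `ZMod l` and `x` a permutation, they are the cycles of `x` of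
length `l` with a marked point. -/
noncomputable def equivariantEmbeddings [Fintype ι] [Fintype α] (r : ι → ι) (x : α → α) :
    Finset (ι ↪ α) :=
  {a | Semiconj a r x}

theorem mem_equivariantEmbeddings [Fintype ι] [Fintype α] {r : ι → ι} {x : α → α} {a : ι ↪ α} :
    a ∈ equivariantEmbeddings r x ↔ Semiconj a r x := by
  simp only [equivariantEmbeddings, mem_filter_univ]

theorem sum_card_equivariantEmbeddings {G : Type*} [Group G] [Fintype G] [MulAction G α] [Fintype ι]
    [Fintype α] [IsPretransitive G (ι ↪ α)] [Nonempty (ι ↪ α)] (r : ι ↪ ι) :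
    ∑ g : G, #(equivariantEmbeddings r (g • · : α → α)) = Fintype.card G := by
  rw [← sum_card_filter_smul_eq_apply (G := G) fun a : ι ↪ α => r.trans a]
  refine sum_congr rfl fun g _ => congrArg card ?_
  ext a
  simp only [mem_equivariantEmbeddings, mem_filter_univ, DFunLike.ext_iff]
  exact forall_congr' fun _ => eq_comm

theorem isPretransitive_embedding_congr (G : Type*) [Group G] [MulAction G α] (e : ι ≃ κ)
    [IsPretransitive G (ι ↪ α)] : IsPretransitive G (κ ↪ α) where
  exists_smul_eq a b := by
    obtain ⟨g, hg⟩ := exists_smul_eq G (e.toEmbedding.trans a) (e.toEmbedding.trans b)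
    refine ⟨g, Embedding.ext fun j => ?_⟩
    simpa using DFunLike.congr_fun hg (e.symm j)

variable [Fintype ι] [Fintype α] [DecidableEq α] {H : Subgroup (Equiv.Perm α)}

theorem isPretransitive_embedding_of_alternatingGroup_le (hH : alternatingGroup α ≤ H)
    (hι : Fintype.card ι + 2 ≤ Fintype.card α) : IsPretransitive H (ι ↪ α) where
  exists_smul_eq a b := by
    have := alternatingGroup.isMultiplyPretransitive α
    have : IsMultiplyPretransitive (alternatingGroup α) α (Fintype.card ι) :=
      isMultiplyPretransitive_of_le (n := Nat.card α - 2)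
        (by rw [Nat.card_eq_fintype_card]; omega) (Nat.sub_le _ _)
    have := isPretransitive_embedding_congr (α := α) (alternatingGroup α) (Fintype.equivFin ι).symm
    obtain ⟨g, hg⟩ := exists_smul_eq (alternatingGroup α) a b
    exact ⟨⟨g, hH g.2⟩, hg⟩

theorem sum_card_equivariantEmbeddings_of_alternatingGroup_le (hH : alternatingGroup α ≤ H)
    (hι : Fintype.card ι + 2 ≤ Fintype.card α) (r : ι ↪ ι) :
    ∑ g : H, #(equivariantEmbeddings r (g : Equiv.Perm α)) = Fintype.card H := by
  have := isPretransitive_embedding_of_alternatingGroup_le hH hι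
  have : Nonempty (ι ↪ α) := Embedding.nonempty_of_card_le (by omega)
  exact sum_card_equivariantEmbeddings r

theorem sum_card_equivariantEmbeddings_perm_le (r : ι ↪ ι) :
    ∑ g : Equiv.Perm α, #(equivariantEmbeddings r g) ≤ Fintype.card (Equiv.Perm α) := by
  rcases isEmpty_or_nonempty (ι ↪ α) with _ | _
  · simp [Finset.eq_empty_of_isEmpty]
  · have : IsPretransitive (Equiv.Perm α) (ι ↪ α) := ⟨Equiv.Perm.exists_smul_eq_embedding⟩
    exact (sum_card_equivariantEmbeddings r).le

theorem card_perm_le_two_mul_card (hH : alternatingGroup α ≤ H) :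
    Fintype.card (Equiv.Perm α) ≤ 2 * Fintype.card H := by
  rw [← Nat.card_eq_fintype_card, ← Nat.card_eq_fintype_card]
  cases subsingleton_or_nontrivial α
  · rw [Nat.card_unique]
    have : 0 < Nat.card H := Nat.card_pos
    omega
  · rw [← two_mul_nat_card_alternatingGroup]
    gcongr
    exact Subgroup.card_le_of_le hH

theorem sum_card_equivariantEmbeddings_le_two_mul (hH : alternatingGroup α ≤ H) (r : ι ↪ ι) :
    ∑ g : H, #(equivariantEmbeddings r (g : Equiv.Perm α)) ≤ 2 * Fintype.card H := by
  let count (g : Equiv.Perm α) : ℕ := #(equivariantEmbeddings r g)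
  calc ∑ g : H, count g = ∑ g ∈ univ.map (Embedding.subtype (· ∈ H)), count g :=
        (sum_map univ (Embedding.subtype (· ∈ H)) count).symm
    _ ≤ ∑ g : Equiv.Perm α, count g := sum_le_sum_of_subset (subset_univ _)
    _ ≤ Fintype.card (Equiv.Perm α) := sum_card_equivariantEmbeddings_perm_le r
    _ ≤ 2 * Fintype.card H := card_perm_le_two_mul_card hH

end EquivariantEmbeddings

section Cycles

variable {α : Type*}

theorem minimalPeriod_apply_of_semiconj_s8 {β : Type*} {a : β → α} {r : β → β} {x : α → α}
    (ha : Semiconj a r x) (ha_inj : Injective a) (j : β) :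
    minimalPeriod x (a j) = minimalPeriod r j :=
  minimalPeriod_eq_minimalPeriod_iff.2 fun m => by
    simp only [IsPeriodicPt, IsFixedPt, ← (ha.iterate_right m).eq, ha_inj.eq_iff]

theorem minimalPeriod_eq_of_sameCycle {x : Equiv.Perm α} {z w : α} (h : x.SameCycle z w) :
    minimalPeriod x z = minimalPeriod x w := by
  obtain ⟨i, rfl⟩ := h
  have commute : Semiconj (x ^ i) x x :=
    fun v => Equiv.Perm.congr_fun (Commute.self_zpow x i).eq.symm v
  exact (minimalPeriod_apply_of_semiconj_s8 commute (x ^ i).injective z).symm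

theorem pow_apply_eq_self_iff_minimalPeriod_dvd (x : Equiv.Perm α) (z : α) (m : ℕ) :
    (x ^ m) z = z ↔ minimalPeriod x z ∣ m := by
  rw [← isPeriodicPt_iff_minimalPeriod_dvd, ← Equiv.Perm.iterate_eq_pow]
  rfl

theorem minimalPeriod_dvd_orderOf (x : Equiv.Perm α) (z : α) : minimalPeriod x z ∣ orderOf x := by
  rw [← pow_apply_eq_self_iff_minimalPeriod_dvd, pow_orderOf_eq_one, Equiv.Perm.one_apply]

variable [Fintype α]

/-- The cycle of the permutation `x` through `z`, as a set of points; it is `{z}` when `x` fixes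
`z`. -/
noncomputable def cycleThrough (x : Equiv.Perm α) (z : α) : Finset α :=
  {w | x.SameCycle z w}

theorem mem_cycleThrough {x : Equiv.Perm α} {z w : α} :
    w ∈ cycleThrough x z ↔ x.SameCycle z w := by
  simp only [cycleThrough, mem_filter_univ]

theorem isCycleOn_cycleThrough (x : Equiv.Perm α) (z : α) : x.IsCycleOn (cycleThrough x z) := by
  refine ⟨⟨fun w hw => ?_, x.injective.injOn, fun w hw => ⟨x⁻¹ w, ?_, x.apply_symm_apply w⟩⟩,
    fun v hv w hw => ?_⟩
  · simpa [mem_cycleThrough] using hw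
  · simpa [mem_cycleThrough] using hw
  · rw [mem_coe, mem_cycleThrough] at hv hw
    exact hv.symm.trans hw

theorem minimalPeriod_eq_card_cycleThrough (x : Equiv.Perm α) (z : α) :
    minimalPeriod x z = #(cycleThrough x z) :=
  Nat.dvd_right_iff_eq.1 fun m => by
    rw [← pow_apply_eq_self_iff_minimalPeriod_dvd, (isCycleOn_cycleThrough x z).pow_apply_eq
      (mem_cycleThrough.2 (.refl x z))]

/-- The points of the cycles of `x` whose length is divisible by `b`. -/
noncomputable def pointsOfPeriodDvdBy (b : ℕ) (x : Equiv.Perm α) : Finset α :=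
  {z | b ∣ minimalPeriod x z}

theorem mem_pointsOfPeriodDvdBy {b : ℕ} {x : Equiv.Perm α} {z : α} :
    z ∈ pointsOfPeriodDvdBy b x ↔ b ∣ minimalPeriod x z := by
  simp only [pointsOfPeriodDvdBy, mem_filter_univ]

theorem cycleThrough_subset_pointsOfPeriodDvdBy {b : ℕ} {x : Equiv.Perm α} {z : α}
    (h : b ∣ minimalPeriod x z) : cycleThrough x z ⊆ pointsOfPeriodDvdBy b x := fun w hw => by
  rw [mem_cycleThrough] at hw
  rwa [mem_pointsOfPeriodDvdBy, ← minimalPeriod_eq_of_sameCycle hw]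

/-- The pairs consisting of a point of a `b`-cycle of `x` and a point of a different cycle of `x`,
of length `l`. -/
noncomputable def pairsOnDistinctCycles (b l : ℕ) (x : Equiv.Perm α) : Finset (α × α) :=
  {p | minimalPeriod x p.1 = b ∧ minimalPeriod x p.2 = l ∧ ¬ x.SameCycle p.1 p.2}

theorem card_pairsOnDistinctCycles (b l : ℕ) (x : Equiv.Perm α) :
    #(pairsOnDistinctCycles b l x) = ∑ z with minimalPeriod x z = b,
      #{w | minimalPeriod x w = l ∧ ¬ x.SameCycle z w} := by
  simp only [pairsOnDistinctCycles, card_filter, Fintype.sum_prod_type, sum_filter, ite_and]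
  exact sum_congr rfl fun z _ => by split_ifs <;> simp

theorem exists_card_filter_of_card_pointsOfPeriodDvdBy_ne {b : ℕ} (hb : 0 < b) {x : Equiv.Perm α}
    (hx : #(pointsOfPeriodDvdBy b x) ≠ b) {z : α} (hz : minimalPeriod x z = b) :
    ∃ i < Fintype.card α / b - 1,
      (i + 1) * b ≤ #{w | minimalPeriod x w = (i + 1) * b ∧ ¬ x.SameCycle z w} := by
  have card_z : #(cycleThrough x z) = b := by rw [← minimalPeriod_eq_card_cycleThrough, hz]
  have z_subset : cycleThrough x z ⊆ pointsOfPeriodDvdBy b x :=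
    cycleThrough_subset_pointsOfPeriodDvdBy hz.symm.dvd
  obtain ⟨w, hw, hzw⟩ : ∃ w ∈ pointsOfPeriodDvdBy b x, w ∉ cycleThrough x z := by
    by_contra! h
    exact hx (by rw [← z_subset.antisymm h, card_z])
  rw [mem_cycleThrough] at hzw
  obtain ⟨c, hc⟩ := mem_pointsOfPeriodDvdBy.1 hw
  have card_w : #(cycleThrough x w) = b * c := by rw [← minimalPeriod_eq_card_cycleThrough, hc]
  have card_w_pos : 0 < b * c := card_w ▸ card_pos.2 ⟨w, mem_cycleThrough.2 (.refl x w)⟩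
  obtain ⟨i, rfl⟩ := Nat.exists_eq_add_one.2 (Nat.pos_of_mul_pos_left card_w_pos)
  have cycles_disjoint : Disjoint (cycleThrough x z) (cycleThrough x w) :=
    disjoint_left.2 fun v hzv hwv =>
      hzw ((mem_cycleThrough.1 hzv).trans (mem_cycleThrough.1 hwv).symm)
  have two_cycles_le : (i + 2) * b ≤ Fintype.card α := by
    have := card_le_univ (cycleThrough x z ∪ cycleThrough x w)
    rw [card_union_of_disjoint cycles_disjoint, card_z, card_w] at this
    linarith
  refine ⟨i, ?_, ?_⟩
  · have := (Nat.le_div_iff_mul_le hb).2 two_cycles_le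
    omega
  · rw [mul_comm, ← card_w]
    refine card_le_card fun v hv => ?_
    rw [mem_cycleThrough] at hv
    rw [mem_filter_univ, ← minimalPeriod_eq_of_sameCycle hv, hc, card_w]
    exact ⟨rfl, fun h => hzw (h.trans hv.symm)⟩

theorem card_minimalPeriod_eq_le {b : ℕ} (hb : 0 < b) (x : Equiv.Perm α) :
    (#{z | minimalPeriod x z = b} : ℝ) ≤ b * (if #(pointsOfPeriodDvdBy b x) = b then 1 else 0) +
      ∑ i ∈ range (Fintype.card α / b - 1),
        (#(pairsOnDistinctCycles b ((i + 1) * b) x) : ℝ) / ((i + 1) * b) := by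
  split_ifs with hx
  · have period_eq_subset : ({z | minimalPeriod x z = b} : Finset α) ⊆ pointsOfPeriodDvdBy b x :=
      fun z hz => mem_pointsOfPeriodDvdBy.2 (mem_filter_univ z |>.1 hz).symm.dvd
    have card_le : (#{z | minimalPeriod x z = b} : ℝ) ≤ b := by
      exact_mod_cast (card_le_card period_eq_subset).trans_eq hx
    rw [mul_one]
    exact le_add_of_le_of_nonneg card_le (sum_nonneg fun i _ => by positivity)
  · simp only [card_pairsOnDistinctCycles, Nat.cast_sum, sum_div, mul_zero, zero_add]
    rw [sum_comm, card_eq_sum_ones, Nat.cast_sum]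
    refine sum_le_sum fun z hz => ?_
    obtain ⟨i, hi, le_card⟩ :=
      exists_card_filter_of_card_pointsOfPeriodDvdBy_ne hb hx ((mem_filter_univ z).1 hz)
    refine le_trans ?_ (single_le_sum (fun i _ => by positivity) (mem_range.2 hi))
    rw [Nat.cast_one, one_le_div (by positivity)]
    exact_mod_cast le_card

theorem dvd_half_of_not_two_pow_dvd {k p N : ℕ} (hp : p ∣ N) (hN : 2 ^ k ∣ N)
    (hkp : ¬ 2 ^ k ∣ p) : p ∣ N / 2 := by
  obtain ⟨q, rfl⟩ := hp
  rcases q.even_or_odd with hq | hq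
  · rw [Nat.mul_div_assoc p hq.two_dvd]
    exact dvd_mul_right _ _
  · exact absurd ((Nat.coprime_two_left.2 hq).pow_left k |>.dvd_of_dvd_mul_right hN) hkp

theorem support_pow_half_orderOf_subset [DecidableEq α] {k : ℕ} {x : Equiv.Perm α}
    (h : 2 ^ k ∣ orderOf x) : (x ^ (orderOf x / 2)).support ⊆ pointsOfPeriodDvdBy (2 ^ k) x := by
  intro z hz
  rw [Equiv.Perm.mem_support, ne_eq, pow_apply_eq_self_iff_minimalPeriod_dvd] at hz
  rw [mem_pointsOfPeriodDvdBy]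
  by_contra hkz
  exact hz (dvd_half_of_not_two_pow_dvd (minimalPeriod_dvd_orderOf x z) h hkz)

theorem even_orderOf_and_card_support_le [DecidableEq α] {k : ℕ} (hk : k ≠ 0) {x : Equiv.Perm α}
    (hx : #(pointsOfPeriodDvdBy (2 ^ k) x) = 2 ^ k) :
    Even (orderOf x) ∧ #(x ^ (orderOf x / 2)).support ≤ 2 ^ k := by
  obtain ⟨z, hz⟩ := card_pos.1 (hx ▸ Nat.two_pow_pos k)
  have two_pow_dvd : 2 ^ k ∣ orderOf x :=
    (mem_pointsOfPeriodDvdBy.1 hz).trans (minimalPeriod_dvd_orderOf x z)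
  exact ⟨even_iff_two_dvd.2 ((dvd_pow_self 2 hk).trans two_pow_dvd),
    (card_le_card (support_pow_half_orderOf_subset two_pow_dvd)).trans_eq hx⟩

end Cycles

section CyclesAsEmbeddings

variable {α : Type*}

theorem exists_cycle_embedding (x : Equiv.Perm α) (z : α) {l : ℕ} [NeZero l]
    (hz : minimalPeriod x z = l) :
    ∃ a : ZMod l ↪ α, Semiconj a (1 + ·) x ∧ a 0 = z ∧ ∀ j, x.SameCycle z (a j) := by
  refine ⟨⟨fun j => x^[j.val] z, fun i j hij => ZMod.val_injective l ?_⟩, fun j => ?_, ?_,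
    fun j => ⟨((j.val : ℕ) : ℤ), ?_⟩⟩
  · exact iterate_injOn_Iio_minimalPeriod (hz ▸ i.val_lt) (hz ▸ j.val_lt) hij
  · change x^[(1 + j).val] z = x (x^[j.val] z)
    rw [← iterate_succ_apply' x, ← iterate_mod_minimalPeriod_eq (n := j.val.succ), hz,
      ZMod.val_add, ZMod.val_one_eq_one_mod, Nat.mod_add_mod, Nat.add_comm]
  · change x^[(0 : ZMod l).val] z = z
    rw [ZMod.val_zero, iterate_zero_apply]
  · rw [zpow_natCast, ← Equiv.Perm.iterate_eq_pow]
    rfl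

theorem apply_eq_iterate_of_semiconj_one_add {l : ℕ} [NeZero l] {a : ZMod l → α} {x : α → α}
    (ha : Semiconj a (1 + ·) x) (j : ZMod l) : a j = x^[j.val] (a 0) := by
  rw [← ha.iterate_right]
  simp

variable [Fintype α]

theorem card_equivariantEmbeddings_le_card_minimalPeriod_eq (b : ℕ) [NeZero b] (x : Equiv.Perm α) :
    #(equivariantEmbeddings (addLeftEmbedding (1 : ZMod b)) x) ≤ #{z | minimalPeriod x z = b} := by
  refine card_le_card_of_injOn (fun a => a 0) (fun a ha => ?_) fun a ha a' ha' h => ?_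
  · rw [mem_coe, mem_equivariantEmbeddings] at ha
    rw [mem_coe, mem_filter_univ, minimalPeriod_apply_of_semiconj_s8 ha a.injective]
    exact ZMod.addOrderOf_one b
  · rw [mem_coe, mem_equivariantEmbeddings] at ha ha'
    ext j
    rw [apply_eq_iterate_of_semiconj_one_add ha, apply_eq_iterate_of_semiconj_one_add ha']
    exact congrArg _ h

theorem card_pairsOnDistinctCycles_le_card_equivariantEmbeddings (b l : ℕ) [NeZero b] [NeZero l]
    (x : Equiv.Perm α) :
    #(pairsOnDistinctCycles b l x) ≤ #(equivariantEmbeddings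
      ((addLeftEmbedding (1 : ZMod b)).sumMap (addLeftEmbedding (1 : ZMod l))) x) := by
  refine card_le_card_of_surjOn (fun a => (a (.inl 0), a (.inr 0))) ?_
  rintro ⟨z, w⟩ h
  obtain ⟨hz, hw, hzw⟩ := (mem_filter_univ _).1 (mem_coe.1 h)
  obtain ⟨a, ha, ha0, hza⟩ := exists_cycle_embedding x z hz
  obtain ⟨c, hc, hc0, hwc⟩ := exists_cycle_embedding x w hw
  have elim_injective : Injective (Sum.elim a c) :=
    a.injective.sumElim c.injective fun i j hij => hzw ((hza i).trans (hij ▸ (hwc j).symm))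
  refine ⟨⟨Sum.elim a c, elim_injective⟩, ?_, by simp [ha0, hc0]⟩
  rw [mem_coe, mem_equivariantEmbeddings]
  rintro (j | j)
  · exact ha j
  · exact hc j

end CyclesAsEmbeddings

section Expectations

variable {α : Type*} [Fintype α] [DecidableEq α] {H : Subgroup (Equiv.Perm α)} {b l : ℕ}

theorem card_le_sum_card_minimalPeriod_eq (hH : alternatingGroup α ≤ H) (hb : 0 < b)
    (hbα : b + 2 ≤ Fintype.card α) :
    Fintype.card H ≤ ∑ g : H, #{z | minimalPeriod (g : Equiv.Perm α) z = b} := by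
  have : NeZero b := ⟨hb.ne'⟩
  rw [← sum_card_equivariantEmbeddings_of_alternatingGroup_le hH (by rwa [ZMod.card])
    (addLeftEmbedding (1 : ZMod b))]
  exact sum_le_sum fun g _ => card_equivariantEmbeddings_le_card_minimalPeriod_eq b g.1

theorem sum_card_pairsOnDistinctCycles_le (hH : alternatingGroup α ≤ H) (hb : 0 < b) (hl : 0 < l)
    (hblα : b + l + 2 ≤ Fintype.card α) :
    ∑ g : H, #(pairsOnDistinctCycles b l (g : Equiv.Perm α)) ≤ Fintype.card H := by
  have : NeZero b := ⟨hb.ne'⟩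
  have : NeZero l := ⟨hl.ne'⟩
  refine (sum_le_sum fun (g : H) _ =>
    card_pairsOnDistinctCycles_le_card_equivariantEmbeddings b l g.1).trans_eq ?_
  exact sum_card_equivariantEmbeddings_of_alternatingGroup_le hH
    (by rwa [Fintype.card_sum, ZMod.card, ZMod.card]) _

theorem sum_card_pairsOnDistinctCycles_le_two_mul (hH : alternatingGroup α ≤ H) (hb : 0 < b)
    (hl : 0 < l) :
    ∑ g : H, #(pairsOnDistinctCycles b l (g : Equiv.Perm α)) ≤ 2 * Fintype.card H := by
  have : NeZero b := ⟨hb.ne'⟩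
  have : NeZero l := ⟨hl.ne'⟩
  refine (sum_le_sum fun (g : H) _ =>
    card_pairsOnDistinctCycles_le_card_equivariantEmbeddings b l g.1).trans ?_
  exact sum_card_equivariantEmbeddings_le_two_mul hH _

theorem sum_sum_card_pairsOnDistinctCycles_div_le (hH : alternatingGroup α ≤ H) (hb : 2 ≤ b) :
    ∑ i ∈ range (Fintype.card α / b - 1),
      (∑ g : H, (#(pairsOnDistinctCycles b ((i + 1) * b) (g : Equiv.Perm α)) : ℝ)) /
        ((i + 1) * b) ≤
      Fintype.card H / b * (harmonic (Fintype.card α / b - 1) + 1) := by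
  have hb0 : 0 < b := by omega
  rcases hm : Fintype.card α / b - 1 with _ | m
  · simp only [range_zero, sum_empty, harmonic_zero]
    positivity
  have inner (i : ℕ) (hi : i < m) :
      (∑ g : H, (#(pairsOnDistinctCycles b ((i + 1) * b) (g : Equiv.Perm α)) : ℝ)) /
        ((i + 1) * b) ≤ Fintype.card H / b * (i + 1 : ℝ)⁻¹ := by
    have le_card : (i + 3) * b ≤ Fintype.card α := (Nat.le_div_iff_mul_le hb0).1 (by omega)
    have sum_le : ∑ g : H, (#(pairsOnDistinctCycles b ((i + 1) * b) (g : Equiv.Perm α)) : ℝ) ≤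
        Fintype.card H := by
      exact_mod_cast sum_card_pairsOnDistinctCycles_le hH hb0 (by positivity) (by linarith)
    calc _ ≤ (Fintype.card H : ℝ) / ((i + 1) * b) := by gcongr
      _ = Fintype.card H / b * (i + 1 : ℝ)⁻¹ := by field_simp
  have last : (∑ g : H, (#(pairsOnDistinctCycles b ((m + 1) * b) (g : Equiv.Perm α)) : ℝ)) /
      ((m + 1) * b) ≤ Fintype.card H / b * ((m + 1 : ℝ)⁻¹ + 1) := by
    have sum_le : ∑ g : H, (#(pairsOnDistinctCycles b ((m + 1) * b) (g : Equiv.Perm α)) : ℝ) ≤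
        2 * Fintype.card H := by
      exact_mod_cast sum_card_pairsOnDistinctCycles_le_two_mul hH hb0 (by positivity)
    calc _ ≤ (2 * Fintype.card H : ℝ) / ((m + 1) * b) := by gcongr
      _ = Fintype.card H / b * ((m + 1 : ℝ)⁻¹ + (m + 1 : ℝ)⁻¹) := by field_simp; norm_num
      _ ≤ Fintype.card H / b * ((m + 1 : ℝ)⁻¹ + 1) := by
        gcongr
        exact inv_le_one_of_one_le₀ (by linarith [(m.cast_nonneg : (0 : ℝ) ≤ m)])
  rw [sum_range_succ, harmonic]
  push_cast [sum_range_succ]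
  rw [add_assoc, mul_add, mul_sum]
  exact add_le_add (sum_le_sum fun i hi => inner i (mem_range.1 hi)) last

theorem le_card_filter_card_pointsOfPeriodDvdBy_eq_div_card (hH : alternatingGroup α ≤ H)
    (hb : 2 ≤ b) (hbα : b + 2 ≤ Fintype.card α) :
    (b - (harmonic (Fintype.card α / b - 1) + 1)) / (b : ℝ) ^ 2 ≤
      (#{g : H | #(pointsOfPeriodDvdBy b (g : Equiv.Perm α)) = b} : ℝ) / Fintype.card H := by
  have hb0 : 0 < b := by omega
  have hH0 : (0 : ℝ) < Fintype.card H := by exact_mod_cast Fintype.card_pos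
  have sum_bound : (Fintype.card H : ℝ) ≤
      b * #{g : H | #(pointsOfPeriodDvdBy b (g : Equiv.Perm α)) = b} +
        Fintype.card H / b * (harmonic (Fintype.card α / b - 1) + 1) :=
    calc (Fintype.card H : ℝ) ≤ ∑ g : H, (#{z | minimalPeriod (g : Equiv.Perm α) z = b} : ℝ) := by
          exact_mod_cast card_le_sum_card_minimalPeriod_eq hH hb0 hbα
      _ ≤ _ := sum_le_sum fun g _ => card_minimalPeriod_eq_le hb0 (g : Equiv.Perm α)
      _ = b * #{g : H | #(pointsOfPeriodDvdBy b (g : Equiv.Perm α)) = b} +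
          ∑ i ∈ range (Fintype.card α / b - 1),
            (∑ g : H, (#(pairsOnDistinctCycles b ((i + 1) * b) (g : Equiv.Perm α)) : ℝ)) /
              ((i + 1) * b) := by
        rw [sum_add_distrib, ← mul_sum, sum_boole, sum_comm]
        simp only [sum_div]
      _ ≤ _ := by grw [sum_sum_card_pairsOnDistinctCycles_div_le hH hb]
  rw [div_le_div_iff₀ (by positivity) hH0]
  field_simp at sum_bound
  linarith

end Expectations

section HarmonicEstimate

theorem strictMono_harmonic : StrictMono harmonic :=
  strictMono_nat_of_lt_succ fun n => by
    rw [harmonic_succ]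
    exact lt_add_of_pos_right _ (by positivity)

theorem harmonic_div_sub_one_add_one_le_log {n b : ℕ} (hb : 8 ≤ b) (hbn : b ≤ n) :
    (harmonic (n / b - 1) : ℝ) + 1 ≤ Real.log n := by
  have hb0 : (0 : ℝ) < b := by positivity
  have two_le_log : 2 ≤ Real.log b :=
    calc (2 : ℝ) ≤ 3 * Real.log 2 := by linarith [Real.log_two_gt_d9]
      _ = Real.log (2 ^ 3) := by rw [Real.log_pow]; norm_num
      _ ≤ Real.log b := Real.log_le_log (by norm_num) (by norm_num; exact_mod_cast hb)
  calc (harmonic (n / b - 1) : ℝ) + 1 ≤ harmonic ⌊(n : ℝ) / b⌋₊ + 1 := by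
        rw [Nat.floor_div_eq_div]
        gcongr
        exact strictMono_harmonic.monotone (Nat.sub_le _ _)
    _ ≤ 1 + Real.log (n / b) + 1 := by
        gcongr
        exact harmonic_floor_le_one_add_log _ ((one_le_div hb0).2 (by exact_mod_cast hbn))
    _ = Real.log n - Real.log b + 2 := by
        rw [Real.log_div (by norm_cast; omega) hb0.ne']
        ring
    _ ≤ Real.log n := by linarith

theorem sixteen_le_thirteen_mul_log_mul_four_sub_harmonic {n : ℕ} (hn : 9 ≤ n) (hn' : n < 36) :
    16 ≤ 13 * Real.log n * (4 - (harmonic (n / 4 - 1) + 1)) := by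
  have one_le_log_three : 1 ≤ Real.log 3 := by
    rw [Real.le_log_iff_exp_le (by norm_num)]
    exact Real.exp_one_lt_three.le
  rcases lt_or_ge n 24 with h24 | h24
  · have harmonic_le : (harmonic (n / 4 - 1) : ℝ) ≤ 25 / 12 :=
      calc (harmonic (n / 4 - 1) : ℝ) ≤ harmonic 4 :=
            Rat.cast_le.2 (strictMono_harmonic.monotone (by omega))
        _ = 25 / 12 := by norm_num [harmonic, sum_range_succ]
    have two_le_log : 2 ≤ Real.log n :=
      calc 2 ≤ 2 * Real.log 3 := by linarith
        _ = Real.log (3 ^ 2) := by rw [Real.log_pow]; norm_num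
        _ ≤ Real.log n := Real.log_le_log (by norm_num) (by norm_num; exact_mod_cast hn)
    calc (16 : ℝ) ≤ 13 * 2 * (4 - (25 / 12 + 1)) := by norm_num
      _ ≤ _ := by gcongr
  · have harmonic_le : (harmonic (n / 4 - 1) : ℝ) ≤ 363 / 140 :=
      calc (harmonic (n / 4 - 1) : ℝ) ≤ harmonic 7 :=
            Rat.cast_le.2 (strictMono_harmonic.monotone (by omega))
        _ = 363 / 140 := by norm_num [harmonic, sum_range_succ]
    have le_log : 3.07 ≤ Real.log n :=
      calc 3.07 ≤ 3 * Real.log 2 + Real.log 3 := by linarith [Real.log_two_gt_d9]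
        _ = Real.log (2 ^ 3 * 3) := by
          rw [Real.log_mul (by norm_num) (by norm_num), Real.log_pow]; norm_num
        _ ≤ Real.log n := Real.log_le_log (by norm_num) (by norm_num; exact_mod_cast h24)
    calc (16 : ℝ) ≤ 13 * 3.07 * (4 - (363 / 140 + 1)) := by norm_num
      _ ≤ _ := by gcongr

theorem nine_fourths_mul_log_le_sqrt {x : ℝ} (hx0 : 0 < x) (hx : 7 ≤ Real.log x) :
    9 / 4 * Real.log x ≤ √x := by
  have le_exp_three : 19 ≤ Real.exp 3 :=
    calc (19 : ℝ) ≤ 2.7 ^ 3 := by norm_num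
      _ ≤ Real.exp 1 ^ 3 := by gcongr; linarith [Real.exp_one_gt_d9]
      _ = Real.exp 3 := by rw [← Real.exp_nat_mul]; norm_num
  calc 9 / 4 * Real.log x ≤ 19 * (Real.log x / 2 - 3 + 1) := by linarith
    _ ≤ Real.exp 3 * Real.exp (Real.log x / 2 - 3) := by
      gcongr
      · linarith
      · exact Real.add_one_le_exp _
    _ = √x := by rw [← Real.exp_add, add_sub_cancel, Real.exp_half, Real.exp_log hx0]

theorem exists_two_pow_sq_le_log_mul {x : ℝ} (hx : 36 ≤ x) :
    ∃ k : ℕ, 8 ≤ 2 ^ k ∧ (2 ^ k : ℝ) ≤ 4 * √x / 3 ∧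
      (2 ^ k : ℝ) ^ 2 ≤ 13 * Real.log x * (2 ^ k - Real.log x) := by
  rcases le_or_gt (Real.log x) 7 with hL | hL
  · have six_le_sqrt : 6 ≤ √x := Real.le_sqrt_of_sq_le (by linarith)
    have one_le_log : 1 ≤ Real.log x := by
      rw [Real.le_log_iff_exp_le (by linarith)]
      linarith [Real.exp_one_lt_three]
    refine ⟨3, by norm_num, by linarith, ?_⟩
    nlinarith [mul_nonneg (sub_nonneg.2 one_le_log) (sub_nonneg.2 hL)]
  · have log_le_sqrt : 9 / 4 * Real.log x ≤ √x := nine_fourths_mul_log_le_sqrt (by linarith) hL.le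
    obtain ⟨m, hm_le, hm_lt⟩ := exists_nat_pow_near (x := 3 / 2 * Real.log x) (y := 2)
      (by linarith) (by norm_num)
    have two_pow_le : (2 : ℝ) ^ (m + 1) ≤ 3 * Real.log x := by rw [pow_succ]; linarith
    have two_pow_ge : 3 / 2 * Real.log x ≤ 2 ^ (m + 1) := hm_lt.le
    refine ⟨m + 1, ?_, by linarith, ?_⟩
    · have : (8 : ℝ) ≤ 2 ^ (m + 1) := by linarith
      exact_mod_cast this
    · nlinarith [mul_nonneg (sub_nonneg.2 two_pow_le) (sub_nonneg.2 two_pow_ge)]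

theorem add_two_le_of_le_four_mul_sqrt_div_three {n b : ℕ} (hn : 9 ≤ n)
    (hb : (b : ℝ) ≤ 4 * √n / 3) : b + 2 ≤ n := by
  have three_le_sqrt : 3 ≤ √(n : ℝ) := Real.le_sqrt_of_sq_le (by norm_num; exact_mod_cast hn)
  have : (b + 2 : ℝ) ≤ n := by nlinarith [Real.sq_sqrt n.cast_nonneg]
  exact_mod_cast this

theorem exists_two_pow_one_div_log_le {n : ℕ} (hn : 9 ≤ n) :
    ∃ k : ℕ, k ≠ 0 ∧ (2 ^ k : ℝ) ≤ 4 * √n / 3 ∧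
      1 / (13 * Real.log n) ≤ (2 ^ k - (harmonic (n / 2 ^ k - 1) + 1)) / (2 ^ k : ℝ) ^ 2 := by
  have log_pos : 0 < Real.log n := Real.log_pos (by exact_mod_cast (by omega : 1 < n))
  simp_rw [div_le_div_iff₀ (mul_pos (by norm_num : (0 : ℝ) < 13) log_pos)
    (by positivity : (0 : ℝ) < (2 ^ _) ^ 2), one_mul, mul_comm _ (13 * Real.log n)]
  rcases lt_or_ge n 36 with h36 | h36
  · have three_le_sqrt : 3 ≤ √(n : ℝ) := Real.le_sqrt_of_sq_le (by norm_num; exact_mod_cast hn)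
    refine ⟨2, by norm_num, by linarith, ?_⟩
    norm_num [sixteen_le_thirteen_mul_log_mul_four_sub_harmonic hn h36]
  · obtain ⟨k, hk8, hk_sqrt, hk⟩ := exists_two_pow_sq_le_log_mul (x := n) (by exact_mod_cast h36)
    have two_pow_le : 2 ^ k ≤ n := by
      have := add_two_le_of_le_four_mul_sqrt_div_three hn (by exact_mod_cast hk_sqrt)
      omega
    have harmonic_le := harmonic_div_sub_one_add_one_le_log hk8 two_pow_le
    refine ⟨k, by rintro rfl; omega, hk_sqrt, hk.trans ?_⟩
    gcongr

end HarmonicEstimate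

section Tuples

variable {ι α : Type*} [Fintype ι] [DecidableEq ι] [Fintype α] [Nonempty α]

theorem card_exists_div_card (P : α → Prop) [DecidablePred P]
    [DecidablePred fun f : ι → α => ∃ i, P (f i)] :
    (#{f : ι → α | ∃ i, P (f i)} : ℝ) / Fintype.card (ι → α) =
      1 - (1 - #{a | P a} / Fintype.card α) ^ Fintype.card ι := by
  have card_ne_zero : (Fintype.card α : ℝ) ≠ 0 := by exact_mod_cast Fintype.card_ne_zero
  have filter_not : ({f : ι → α | ¬ ∃ i, P (f i)} : Finset (ι → α)) =
      Fintype.piFinset fun _ => ({a | ¬ P a} : Finset α) := by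
    ext f
    simp only [not_exists, mem_filter_univ, Fintype.mem_piFinset]
  have card_tuples : (#{f : ι → α | ∃ i, P (f i)} : ℝ) + #{a | ¬ P a} ^ Fintype.card ι =
      Fintype.card α ^ Fintype.card ι := by
    have := card_filter_add_card_filter_not (s := (univ : Finset (ι → α))) fun f => ∃ i, P (f i)
    rw [filter_not, Fintype.card_piFinset, prod_const, card_univ, card_univ,
      Fintype.card_fun] at this
    exact_mod_cast this
  have card_points : (#{a | P a} : ℝ) + #{a | ¬ P a} = Fintype.card α := by
    exact_mod_cast card_filter_add_card_filter_not (s := (univ : Finset α)) P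
  rw [one_sub_div card_ne_zero, div_pow, Fintype.card_fun, Nat.cast_pow,
    ← card_points, add_sub_cancel_left, card_points, one_sub_div (pow_ne_zero _ card_ne_zero),
    ← card_tuples, add_sub_cancel_right]

theorem one_sub_le_card_exists_div_card (P : α → Prop) [DecidablePred P]
    [DecidablePred fun f : ι → α => ∃ i, P (f i)] {p ε : ℝ}
    (hp : p ≤ #{a | P a} / Fintype.card α) (hε : 0 < ε)
    (hι : Real.log ε⁻¹ ≤ p * Fintype.card ι) :
    1 - ε ≤ (#{f : ι → α | ∃ i, P (f i)} : ℝ) / Fintype.card (ι → α) := by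
  have density_le_one : (#{a | P a} : ℝ) / Fintype.card α ≤ 1 :=
    div_le_one_of_le₀ (by exact_mod_cast card_le_univ _) (by positivity)
  rw [card_exists_div_card]
  gcongr
  calc (1 - #{a | P a} / Fintype.card α : ℝ) ^ Fintype.card ι
      ≤ Real.exp (-p) ^ Fintype.card ι := by
        gcongr
        linarith [Real.one_sub_le_exp_neg p]
    _ = Real.exp (-(p * Fintype.card ι)) := by rw [← Real.exp_nat_mul]; ring_nf
    _ ≤ Real.exp (Real.log ε) := by
        rw [Real.log_inv] at hι
        gcongr
        linarith
    _ = ε := Real.exp_log hε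

end Tuples

section InvolutionDensity

variable {α : Type*} [Fintype α] [DecidableEq α] {H : Subgroup (Equiv.Perm α)}

theorem one_div_log_le_card_filter_even_orderOf_div_card (hα : 9 ≤ Fintype.card α)
    (hH : alternatingGroup α ≤ H) :
    1 / (13 * Real.log (Fintype.card α)) ≤
      (#{g : H | Even (orderOf (g : Equiv.Perm α)) ∧
        (#((g : Equiv.Perm α) ^ (orderOf (g : Equiv.Perm α) / 2)).support : ℝ) ≤
          ((⌊4 * √(Fintype.card α) / 3⌋ : ℤ) : ℝ)} : ℝ) / Fintype.card H := by
  obtain ⟨k, hk, two_pow_le, density_ge⟩ := exists_two_pow_one_div_log_le hα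
  have two_pow_le_floor : ((2 ^ k : ℕ) : ℝ) ≤ ((⌊4 * √(Fintype.card α) / 3⌋ : ℤ) : ℝ) := by
    rw [← Int.cast_natCast, Int.cast_le, Int.le_floor]
    exact_mod_cast two_pow_le
  have card_good_div_card := le_card_filter_card_pointsOfPeriodDvdBy_eq_div_card hH
    (Nat.le_self_pow hk 2)
    (add_two_le_of_le_four_mul_sqrt_div_three hα (by exact_mod_cast two_pow_le))
  push_cast at card_good_div_card
  refine (density_ge.trans card_good_div_card).trans ?_
  gcongr with g
  intro hg
  obtain ⟨even_order, card_support_le⟩ := even_orderOf_and_card_support_le hk hg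
  exact ⟨even_order, (Nat.cast_le.2 card_support_le).trans two_pow_le_floor⟩

theorem smallSupportInvolution_found_with_high_probability_general
    (hα : 9 ≤ Fintype.card α) (hH : alternatingGroup α ≤ H) {ε : ℝ} (hε : 0 < ε) {T : ℕ}
    (hT : 13 * Real.log (Fintype.card α) * Real.log ε⁻¹ ≤ T) :
    1 - ε ≤
      (#{f : Fin T → H | ∃ i, Even (orderOf (f i : Equiv.Perm α)) ∧
        (#((f i : Equiv.Perm α) ^ (orderOf (f i : Equiv.Perm α) / 2)).support : ℝ) ≤
          ((⌊4 * √(Fintype.card α) / 3⌋ : ℤ) : ℝ)} : ℝ) / Fintype.card (Fin T → H) := by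
  have log_pos : 0 < Real.log (Fintype.card α) := Real.log_pos (by norm_cast; omega)
  have log_inv_le : Real.log ε⁻¹ ≤
      1 / (13 * Real.log (Fintype.card α)) * Fintype.card (Fin T) := by
    rwa [Fintype.card_fin, div_mul_eq_mul_div, one_mul, le_div_iff₀' (by positivity)]
  exact (one_sub_le_card_exists_div_card _
    (one_div_log_le_card_filter_even_orderOf_div_card hα hH) hε log_inv_le :)

end InvolutionDensity

/-- Let `n ≥ 9`, `G ∈ {Alt_n, Sym_n}`, `0 < ε < 1` and
`T = ⌈13·log n·log ε⁻¹⌉`.  Among all `T`-tuples of elements of `G` (each tuple equally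
likely, which models `T` independent uniform random elements), the proportion of tuples
containing an element `x` of even order with `x^(|x|/2)` moving at most `⌊4√n/3⌋` points
is at least `1 − ε`. -/
theorem smallSupportInvolution_found_with_high_probability (n : ℕ) (hn : 9 ≤ n)
    (H : Subgroup (Equiv.Perm (Fin n))) (hH : H = ⊤ ∨ H = alternatingGroup (Fin n))
    (ε : ℝ) (hε0 : 0 < ε) (hε1 : ε < 1)
    (T : ℕ) (hT : T = ⌈13 * Real.log n * Real.log ε⁻¹⌉₊) :
    1 - ε ≤
      ((Finset.univ.filter (fun f : Fin T → H => ∃ i : Fin T,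
          Even (orderOf ((f i : Equiv.Perm (Fin n)))) ∧
          ((((f i : Equiv.Perm (Fin n)) ^
              (orderOf ((f i : Equiv.Perm (Fin n))) / 2)).support.card : ℝ)
            ≤ ((⌊4 * Real.sqrt n / 3⌋ : ℤ) : ℝ)))).card : ℝ) /
        (Fintype.card (Fin T → H) : ℝ) := by
  have alternating_le : alternatingGroup (Fin n) ≤ H := by rcases hH with rfl | rfl <;> simp
  simpa only [Fintype.card_fin] using
    smallSupportInvolution_found_with_high_probability_general (by rwa [Fintype.card_fin])
      alternating_le hε0 (by rw [Fintype.card_fin, hT]; exact Nat.le_ceil _)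
end
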